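/- arXiv:1211.3442 — 2 statements merged into one kernel-verified Lean document; each statement's English description precedes it below -/
import Mathlib

section
/- For every n, the number of board-minimal 132-avoiding full rook placements on Ferrers boards in F_n equals the number of 1324-avoiding permutations of [n]. -/
/-! ### Patterns of length 3 and 4 as permutations (0-indexed values) -/

def p123 : Equiv.Perm (Fin 3) :=
  ⟨![0,1,2], ![0,1,2], by intro x; fin_cases x <;> rfl, by intro x; fin_cases x <;> rfl⟩
def p132 : Equiv.Perm (Fin 3) :=
  ⟨![0,2,1], ![0,2,1], by intro x; fin_cases x <;> rfl, by intro x; fin_cases x <;> rfl⟩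
def p213 : Equiv.Perm (Fin 3) :=
  ⟨![1,0,2], ![1,0,2], by intro x; fin_cases x <;> rfl, by intro x; fin_cases x <;> rfl⟩
def p231 : Equiv.Perm (Fin 3) :=
  ⟨![1,2,0], ![2,0,1], by intro x; fin_cases x <;> rfl, by intro x; fin_cases x <;> rfl⟩
def p312 : Equiv.Perm (Fin 3) :=
  ⟨![2,0,1], ![1,2,0], by intro x; fin_cases x <;> rfl, by intro x; fin_cases x <;> rfl⟩
def p321 : Equiv.Perm (Fin 3) :=
  ⟨![2,1,0], ![2,1,0], by intro x; fin_cases x <;> rfl, by intro x; fin_cases x <;> rfl⟩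
def p1342 : Equiv.Perm (Fin 4) :=
  ⟨![0,2,3,1], ![0,3,1,2], by intro x; fin_cases x <;> rfl, by intro x; fin_cases x <;> rfl⟩
def p1324 : Equiv.Perm (Fin 4) :=
  ⟨![0,2,1,3], ![0,2,1,3], by intro x; fin_cases x <;> rfl, by intro x; fin_cases x <;> rfl⟩

/-! ### Perfect matchings of `[2n] = {1, …, 2n}` as finsets of pairs `(i,j)`, `i < j` -/

/-- `M` is a perfect matching of `{1, …, 2n}`. -/
def IsPerfectMatching (n : ℕ) (M : Finset (ℕ × ℕ)) : Prop :=
  (∀ p ∈ M, p.1 < p.2 ∧ 1 ≤ p.1 ∧ p.2 ≤ 2 * n) ∧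
  ∀ x, 1 ≤ x → x ≤ 2 * n → ∃! p, p ∈ M ∧ (p.1 = x ∨ p.2 = x)

/-- The matching `M` contains the pattern `τ ∈ S_k`: there are
`i_1 < i_2 < ⋯ < i_{2k}` with `(i_a, i_{2k+1-τ(a)}) ∈ M` for all `1 ≤ a ≤ k`
(written here 0-indexed). -/
def MatchContains {k : ℕ} (τ : Equiv.Perm (Fin k)) (M : Finset (ℕ × ℕ)) : Prop :=
  ∃ f : Fin (2 * k) → ℕ, StrictMono f ∧
    ∀ a : Fin k,
      (f ⟨a.1, by have := a.isLt; omega⟩,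
       f ⟨2 * k - 1 - (τ a).1, by have := (τ a).isLt; omega⟩) ∈ M

def MatchAvoids {k : ℕ} (τ : Equiv.Perm (Fin k)) (M : Finset (ℕ × ℕ)) : Prop :=
  ¬ MatchContains τ M

/-! ### Dyck paths as lists of booleans (`true` = east step, `false` = south step) -/

/-- A Dyck path of semilength `n`, from `(0,n)` to `(n,0)`, staying weakly above `y = n - x`. -/
def IsDyckPath (n : ℕ) (t : List Bool) : Prop :=
  t.length = 2 * n ∧ t.count true = n ∧
  ∀ i, (t.take i).count false ≤ (t.take i).count true

/-- The height (distance above the diagonal) of the `i`-th vertex of the path `t`. -/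
def pathHeight (t : List Bool) (i : ℕ) : ℤ :=
  ((t.take i).count true : ℤ) - ((t.take i).count false : ℤ)

/-- `s` lies weakly below `t` (for paths of the same semilength). -/
def WeaklyBelow (s t : List Bool) : Prop := ∀ i, pathHeight s i ≤ pathHeight t i

/-- The shape of a matching of `[2n]`: an east step for each opener, a south step for
each closer. -/
def shapeOf (n : ℕ) (M : Finset (ℕ × ℕ)) : List Bool :=
  (List.range (2 * n)).map fun x => decide ((x + 1) ∈ M.image Prod.fst)

/-- Number of returns of a path: south steps ending on the diagonal. -/
def returnsOf (t : List Bool) : ℕ :=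
  ((Finset.range t.length).filter fun i =>
    t[i]? = some false ∧ (t.take (i+1)).count true = (t.take (i+1)).count false).card

/-- Height sequence of a path, as natural numbers. -/
def hseq (t : List Bool) (i : ℕ) : ℕ := (t.take i).count true - (t.take i).count false

/-- `η(F)`: the number of indices `0 ≤ i ≤ 2n` with `h_i = 2`. -/
def etaOf (n : ℕ) (t : List Bool) : ℕ :=
  ((Finset.range (2 * n + 1)).filter fun i => hseq t i = 2).card

/-! ### Full rook placements on Ferrers boards -/

/-- The square in column `c`, row `r` (both 1-indexed from the bottom left) belongs to the
Ferrers board with border path `t ∈ F_n`. -/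
def InBoard (n : ℕ) (t : List Bool) (c r : ℕ) : Prop :=
  1 ≤ c ∧ 1 ≤ r ∧ ∃ i, c ≤ (t.take i).count true ∧ (t.take i).count false + r ≤ n

/-- `R` is a full rook placement on the Ferrers board with border path `t ∈ F_n`:
one rook in each of the `n` rows and `n` columns. -/
def IsFullRookPlacement (n : ℕ) (t : List Bool) (R : Finset (ℕ × ℕ)) : Prop :=
  (∀ p ∈ R, InBoard n t p.1 p.2) ∧
  (∀ c, 1 ≤ c → c ≤ n → ∃! p, p ∈ R ∧ p.1 = c) ∧
  (∀ r, 1 ≤ r → r ≤ n → ∃! p, p ∈ R ∧ p.2 = r)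

/-- The rooks of `R` lying in the rectangle `Γ(V_i)` determined by the `i`-th border vertex. -/
def rectRooks (n : ℕ) (t : List Bool) (R : Finset (ℕ × ℕ)) (i : ℕ) : Finset (ℕ × ℕ) :=
  R.filter fun p => p.1 ≤ (t.take i).count true ∧ p.2 + (t.take i).count false ≤ n

/-- Length of the longest increasing sequence (in both coordinates) in a finite point set. -/
def lisLen (S : Finset (ℕ × ℕ)) : ℕ :=
  (S.powerset.filter fun T => ∀ p ∈ T, ∀ q ∈ T, p.1 < q.1 → p.2 < q.2).sup Finset.card

/-- The full rook placement `R` on the board with border `t ∈ F_n` contains the pattern `τ`: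
some rectangle `Γ(V_i)` contains an occurrence of `τ`. -/
def PlacementContains {k : ℕ} (τ : Equiv.Perm (Fin k)) (n : ℕ) (t : List Bool)
    (R : Finset (ℕ × ℕ)) : Prop :=
  ∃ i ≤ 2 * n, ∃ f : Fin k → ℕ × ℕ,
    (∀ a, f a ∈ R ∧ (f a).1 ≤ (t.take i).count true ∧ (f a).2 + (t.take i).count false ≤ n) ∧
    (∀ a b : Fin k, a < b → (f a).1 < (f b).1) ∧
    (∀ a b : Fin k, τ a < τ b → (f a).2 < (f b).2)

def PlacementAvoids {k : ℕ} (τ : Equiv.Perm (Fin k)) (n : ℕ) (t : List Bool)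
    (R : Finset (ℕ × ℕ)) : Prop :=
  ¬ PlacementContains τ n t R

/-- `R` is board-minimal on the board with border `t`: every peak corner square holds a rook. -/
def BoardMinimal (n : ℕ) (t : List Bool) (R : Finset (ℕ × ℕ)) : Prop :=
  ∀ i, t[i]? = some true → t[i+1]? = some false →
    ((t.take (i+1)).count true, n - (t.take (i+1)).count false) ∈ R

/-- Board-minimal full rook placements on boards of `F_n` avoiding the pattern `σ`,
recorded as pairs (border path, rook set). -/
def MinPlacements (n : ℕ) {k : ℕ} (σ : Equiv.Perm (Fin k)) :
    Set (List Bool × Finset (ℕ × ℕ)) :=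
  {tR | IsDyckPath n tR.1 ∧ IsFullRookPlacement n tR.1 tR.2 ∧ BoardMinimal n tR.1 tR.2 ∧
        PlacementAvoids σ n tR.1 tR.2}

/-! ### Pattern avoidance in permutations -/

def PermContains {n k : ℕ} (τ : Equiv.Perm (Fin k)) (π : Equiv.Perm (Fin n)) : Prop :=
  ∃ f : Fin k → Fin n, StrictMono f ∧ ∀ a b : Fin k, τ a < τ b → π (f a) < π (f b)

def PermAvoids {n k : ℕ} (τ : Equiv.Perm (Fin k)) (π : Equiv.Perm (Fin n)) : Prop :=
  ¬ PermContains τ π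

/-- The full rook placement associated to a permutation of `[n]`. -/
def permPlacement {n : ℕ} (π : Equiv.Perm (Fin n)) : Finset (ℕ × ℕ) :=
  Finset.univ.image fun i : Fin n => ((i : ℕ) + 1, (π i : ℕ) + 1)

/-! ### Matchings with fixed points -/

/-- A (not necessarily perfect) matching on `{1, …, m}`: pairwise disjoint pairs. -/
def IsPartialMatching (m : ℕ) (M : Finset (ℕ × ℕ)) : Prop :=
  (∀ p ∈ M, p.1 < p.2 ∧ 1 ≤ p.1 ∧ p.2 ≤ m) ∧
  ∀ p ∈ M, ∀ q ∈ M, p ≠ q → p.1 ≠ q.1 ∧ p.1 ≠ q.2 ∧ p.2 ≠ q.1 ∧ p.2 ≠ q.2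

/-- The fixed points (unmatched vertices) of a matching on `{1, …, m}`. -/
def fixedPts (m : ℕ) (M : Finset (ℕ × ℕ)) : Finset ℕ :=
  (Finset.Icc 1 m).filter fun x => ∀ p ∈ M, p.1 ≠ x ∧ p.2 ≠ x

/-- The matched vertices of a matching on `{1, …, m}`. -/
def matchedSet (m : ℕ) (M : Finset (ℕ × ℕ)) : Finset ℕ :=
  (Finset.Icc 1 m).filter fun x => ∃ p ∈ M, p.1 = x ∨ p.2 = x

/-- The rank (1-based) of `x` inside the finset `S`. -/
def rankIn (S : Finset ℕ) (x : ℕ) : ℕ := (S.filter (· ≤ x)).card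

/-- The matching obtained by removing the fixed points and relabeling increasingly. -/
def relabeled (m : ℕ) (M : Finset (ℕ × ℕ)) : Finset (ℕ × ℕ) :=
  M.image fun p => (rankIn (matchedSet m M) p.1, rankIn (matchedSet m M) p.2)

/-! ### Set partitions -/

/-- `(i,j)` is an arc of the set partition `P` of `{1, …, n}`: `i < j` lie in a common block
with no element of that block strictly between them. -/
def PartArc {n : ℕ} (P : Finpartition (Finset.Icc 1 n)) (i j : ℕ) : Prop :=
  i < j ∧ ∃ B ∈ P.parts, i ∈ B ∧ j ∈ B ∧ ∀ x ∈ B, ¬(i < x ∧ x < j)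

/-- The set partition `P` contains the pattern `τ ∈ S_k`. -/
def PartContains {k n : ℕ} (τ : Equiv.Perm (Fin k)) (P : Finpartition (Finset.Icc 1 n)) : Prop :=
  ∃ f : Fin (2 * k) → ℕ, StrictMono f ∧
    ∀ a : Fin k,
      PartArc P (f ⟨a.1, by have := a.isLt; omega⟩)
        (f ⟨2 * k - 1 - (τ a).1, by have := (τ a).isLt; omega⟩)

def PartAvoids {k n : ℕ} (τ : Equiv.Perm (Fin k)) (P : Finpartition (Finset.Icc 1 n)) : Prop :=
  ¬ PartContains τ P

/-! ### Counting functions -/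

/-- `|M_n(τ)|`: the number of `τ`-avoiding perfect matchings of `[2n]`. -/
noncomputable def mcount {k : ℕ} (τ : Equiv.Perm (Fin k)) (n : ℕ) : ℕ :=
  {M : Finset (ℕ × ℕ) | IsPerfectMatching n M ∧ MatchAvoids τ M}.ncard

/-- `|M_n(σ,τ)|`: the number of perfect matchings of `[2n]` avoiding both `σ` and `τ`. -/
noncomputable def mcount2 {k : ℕ} (σ τ : Equiv.Perm (Fin k)) (n : ℕ) : ℕ :=
  {M : Finset (ℕ × ℕ) | IsPerfectMatching n M ∧ MatchAvoids σ M ∧ MatchAvoids τ M}.ncard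

/-- `|P_n(τ)|`: the number of `τ`-avoiding set partitions of `[n]`. -/
noncomputable def pcount {k : ℕ} (τ : Equiv.Perm (Fin k)) (n : ℕ) : ℕ :=
  Nat.card {P : Finpartition (Finset.Icc 1 n) // PartAvoids τ P}

/-- `|P_n(σ,τ)|`: the number of set partitions of `[n]` avoiding both `σ` and `τ`. -/
noncomputable def pcount2 {k : ℕ} (σ τ : Equiv.Perm (Fin k)) (n : ℕ) : ℕ :=
  Nat.card {P : Finpartition (Finset.Icc 1 n) // PartAvoids σ P ∧ PartAvoids τ P}

/-- `|S_n(τ)|`: the number of `τ`-avoiding permutations of `[n]`. -/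
noncomputable def scount {k : ℕ} (τ : Equiv.Perm (Fin k)) (n : ℕ) : ℕ :=
  Nat.card {π : Equiv.Perm (Fin n) // PermAvoids τ π}

/-!
Let `π` be a permutation of `[n]`, viewed as the rooks of a placement. The smallest Ferrers board
containing them is the set of squares lying weakly to the left of and below some rook. Its border is
read off greedily: from the current vertex step east exactly when the square between the east and
the south step belongs to that set. This board is the only one on which the placement is
board-minimal, so board-minimal placements correspond to permutations. A top right corner of a
rectangle `Γ(V)` also lies weakly to the left of and below some rook, so an occurrence of `σ` in
`Γ(V)` amounts to an occurrence of `σ` in `π` together with a rook weakly above and to the right of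
it. When `σ` does not end with its maximum, that rook is not part of the occurrence, and the two
together form the pattern `σ ⊕ 1`; for `σ = 132` this is `1324`.
-/

theorem existsUnique_list_forall_getElem?_iff_take (P : List Bool → Prop) (m : ℕ) :
    ∃! t : List Bool, t.length = m ∧ ∀ i < m, (t[i]? = some true ↔ P (t.take i)) := by
  classical
  induction m with
  | zero => exact ⟨[], by simp, fun t ht => List.length_eq_zero_iff.1 ht.1⟩
  | succ m ih =>
    obtain ⟨t, ⟨rfl, ht⟩, t_unique⟩ := ih
    refine ⟨t ++ [decide (P t)], ⟨by simp, fun i hi => ?_⟩, fun s ⟨s_length, hs⟩ => ?_⟩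
    · obtain hi | rfl := Nat.lt_succ_iff_lt_or_eq.1 hi
      · rw [List.getElem?_append_left hi, List.take_append_of_le_length hi.le, ht i hi]
      · simp
    · obtain rfl | ⟨s, b, rfl⟩ := List.eq_nil_or_concat' s
      · simp at s_length
      have length_eq : s.length = t.length := by simpa using s_length
      obtain rfl : s = t := t_unique s ⟨length_eq, fun i hi => by
        have := hs i (by omega)
        rwa [List.getElem?_append_left (by omega),
          List.take_append_of_le_length (by omega)] at this⟩
      have hb : b = true ↔ P s := by simpa using hs s.length (by omega)
      simp [← hb]

section Path

variable {i : ℕ} {t : List Bool}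

/-- The number of east steps among the first `i` steps of `t`, which is the abscissa of the `i`-th
vertex of the path. -/
def eastCount (t : List Bool) (i : ℕ) : ℕ := (t.take i).count true

/-- The number of south steps among the first `i` steps of `t`: the `i`-th vertex of a path in
`F_n` is `(eastCount t i, n - southCount t i)`. -/
def southCount (t : List Bool) (i : ℕ) : ℕ := (t.take i).count false

@[simp]
theorem eastCount_zero (t : List Bool) : eastCount t 0 = 0 := by simp [eastCount]

@[simp]
theorem southCount_zero (t : List Bool) : southCount t 0 = 0 := by simp [southCount]

theorem eastCount_succ (t : List Bool) (i : ℕ) :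
    eastCount t (i + 1) = eastCount t i + if t[i]? = some true then 1 else 0 := by
  rcases h : t[i]? with _ | _ | _ <;> simp [eastCount, List.take_add_one, h]

theorem southCount_succ (t : List Bool) (i : ℕ) :
    southCount t (i + 1) = southCount t i + if t[i]? = some false then 1 else 0 := by
  rcases h : t[i]? with _ | _ | _ <;> simp [southCount, List.take_add_one, h]

theorem eastCount_mono (t : List Bool) : Monotone (eastCount t) :=
  fun _ _ h => (List.take_sublist_take_left h).count_le _

theorem southCount_mono (t : List Bool) : Monotone (southCount t) :=
  fun _ _ h => (List.take_sublist_take_left h).count_le _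

theorem eastCount_of_length_le (h : t.length ≤ i) : eastCount t i = t.count true := by
  rw [eastCount, List.take_of_length_le h]

theorem eastCount_add_southCount (t : List Bool) (i : ℕ) :
    eastCount t i + southCount t i = min i t.length := by
  rw [eastCount, southCount, List.count_true_add_count_false, List.length_take]

theorem exists_east_step {c : ℕ} (hc : 1 ≤ c) (hi : c ≤ eastCount t i) :
    ∃ j < i, t[j]? = some true ∧ c = eastCount t j + 1 := by
  induction i with
  | zero =>
    rw [eastCount_zero] at hi
    omega
  | succ i ih =>
    by_cases hle : c ≤ eastCount t i
    · obtain ⟨j, hj, hstep⟩ := ih hle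
      exact ⟨j, by omega, hstep⟩
    · rw [eastCount_succ] at hi
      split_ifs at hi with heast
      · exact ⟨i, by omega, heast, by omega⟩
      · omega

end Path

section Hull

variable {n c r : ℕ} {t : List Bool} {R : Finset (ℕ × ℕ)}

/-- The square in column `c` and row `r` lies weakly to the left of and below a point of `R`, that
is, it belongs to the smallest Ferrers board containing `R`. -/
def InHull (R : Finset (ℕ × ℕ)) (c r : ℕ) : Prop :=
  ∃ p ∈ R, c ≤ p.1 ∧ r ≤ p.2

theorem InHull.mono {c' r' : ℕ} (h : InHull R c r) (hc : c' ≤ c) (hr : r' ≤ r) :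
    InHull R c' r' := by
  obtain ⟨p, hp, hpc, hpr⟩ := h
  exact ⟨p, hp, hc.trans hpc, hr.trans hpr⟩

/-- The path `t` of length `2n` starting at `(0, n)` is the border of the smallest Ferrers board
containing `R`: from the vertex `(x, y)` it goes east exactly when the square in column `x + 1` and
row `y` belongs to that board. -/
def IsHullBorder (n : ℕ) (t : List Bool) (R : Finset (ℕ × ℕ)) : Prop :=
  t.length = 2 * n ∧
    ∀ i < 2 * n, (t[i]? = some true ↔ InHull R (eastCount t i + 1) (n - southCount t i))

theorem existsUnique_isHullBorder (n : ℕ) (R : Finset (ℕ × ℕ)) : ∃! t, IsHullBorder n t R :=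
  existsUnique_list_forall_getElem?_iff_take
    (fun s => InHull R (s.count true + 1) (n - s.count false)) (2 * n)

namespace BoardMinimal

theorem inHull_of_east_step (hmin : BoardMinimal n t R) (ht : IsDyckPath n t) {i : ℕ}
    (heast : t[i]? = some true) : InHull R (eastCount t i + 1) (n - southCount t i) := by
  obtain ⟨hi, -⟩ := List.getElem?_eq_some_iff.1 heast
  have heast_succ : eastCount t (i + 1) = eastCount t i + 1 := by simp [eastCount_succ, heast]
  have hsouth_succ : southCount t (i + 1) = southCount t i := by simp [southCount_succ, heast]
  -- An east step either starts a peak, whose corner holds a rook, or precedes another east step.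
  rcases hnext : t[i + 1]? with _ | _ | _
  · have hlast : t.length ≤ i + 1 := List.getElem?_eq_none_iff.1 hnext
    have hsum := eastCount_add_southCount t (i + 1)
    have heast_total := eastCount_of_length_le hlast
    have habove : southCount t i ≤ eastCount t i := ht.2.2 i
    have := ht.1
    have := ht.2.1
    omega
  · exact ⟨_, hmin i heast hnext, heast_succ.ge, by rw [← hsouth_succ, southCount]⟩
  · exact (hmin.inHull_of_east_step ht hnext).mono (by omega) (by omega)
termination_by t.length - i

theorem isHullBorder (hmin : BoardMinimal n t R) (ht : IsDyckPath n t)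
    (hR : ∀ p ∈ R, InBoard n t p.1 p.2) : IsHullBorder n t R := by
  refine ⟨ht.1, fun i hi => ⟨hmin.inHull_of_east_step ht, fun ⟨p, hp, hcol, hrow⟩ => ?_⟩⟩
  by_contra hnot_east
  have hsouth : t[i]? = some false := by
    rcases hstep : t[i]? with _ | _ | _
    · have := List.getElem?_eq_none_iff.1 hstep
      have := ht.1
      omega
    · rfl
    · exact absurd hstep hnot_east
  obtain ⟨-, -, j, hj⟩ := hR p hp
  obtain ⟨hcol', hrow'⟩ : p.1 ≤ eastCount t j ∧ southCount t j + p.2 ≤ n := hj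
  have hij : i + 1 ≤ j := by
    by_contra hji
    have := eastCount_mono t (show j ≤ i by omega)
    omega
  have := southCount_mono t hij
  have : southCount t (i + 1) = southCount t i + 1 := by simp [southCount_succ, hsouth]
  omega

end BoardMinimal

namespace IsHullBorder

variable {i : ℕ}

theorem inHull_of_east_step (h : IsHullBorder n t R) (heast : t[i]? = some true) :
    InHull R (eastCount t i + 1) (n - southCount t i) := by
  obtain ⟨hi, -⟩ := List.getElem?_eq_some_iff.1 heast
  exact (h.2 i (h.1 ▸ hi)).1 heast

theorem not_inHull_of_south_step (h : IsHullBorder n t R) (hsouth : t[i]? = some false) :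
    ¬ InHull R (eastCount t i + 1) (n - southCount t i) := by
  obtain ⟨hi, -⟩ := List.getElem?_eq_some_iff.1 hsouth
  simp [← h.2 i (h.1 ▸ hi), hsouth]

theorem inHull_of_le (h : IsHullBorder n t R) (hc : 1 ≤ c) (hcol : c ≤ eastCount t i)
    (hrow : r + southCount t i ≤ n) : InHull R c r := by
  obtain ⟨j, hj, heast, rfl⟩ := exists_east_step hc hcol
  have := southCount_mono t hj.le
  exact (h.inHull_of_east_step heast).mono le_rfl (by omega)

theorem left_or_below (h : IsHullBorder n t R) (hR : ∀ p ∈ R, p.2 ≤ n) (i : ℕ) :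
    ∀ p ∈ R, p.1 ≤ eastCount t i ∨ southCount t i + p.2 ≤ n := by
  intro p hp
  induction i with
  | zero => simpa using Or.inr (hR p hp)
  | succ i ih =>
    rcases hstep : t[i]? with _ | _ | _ <;>
      simp only [eastCount_succ, southCount_succ, hstep, reduceCtorEq, if_true, if_false,
        Option.some.injEq, add_zero]
    · exact ih
    · by_contra hout
      exact h.not_inHull_of_south_step hstep ⟨p, hp, by omega, by omega⟩
    · omega

theorem boardMinimal (h : IsHullBorder n t R) (hR : ∀ p ∈ R, p.2 ≤ n) : BoardMinimal n t R := by
  intro i heast hsouth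
  change (eastCount t (i + 1), n - southCount t (i + 1)) ∈ R
  have heast_succ : eastCount t (i + 1) = eastCount t i + 1 := by simp [eastCount_succ, heast]
  have hsouth_succ : southCount t (i + 1) = southCount t i := by simp [southCount_succ, heast]
  obtain ⟨p, hp, hcol, hrow⟩ := h.inHull_of_east_step heast
  have hnot_right : ¬ eastCount t (i + 1) + 1 ≤ p.1 :=
    fun hright => h.not_inHull_of_south_step hsouth ⟨p, hp, hright, by omega⟩
  have hside := h.left_or_below hR i p hp
  have hcorner : p = (eastCount t (i + 1), n - southCount t (i + 1)) :=
    Prod.ext (by omega) (by omega)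
  exact hcorner ▸ hp

theorem eastCount_le (h : IsHullBorder n t R) (hR : ∀ p ∈ R, p.1 ≤ n) (i : ℕ) :
    eastCount t i ≤ n := by
  by_contra hlt
  obtain ⟨j, -, heast, hj⟩ := exists_east_step n.succ_pos (Nat.succ_le_of_lt (not_le.1 hlt))
  obtain ⟨p, hp, hcol, -⟩ := h.inHull_of_east_step heast
  have := hR p hp
  omega

theorem southCount_le_eastCount (h : IsHullBorder n t R)
    (hdiag : ∀ a < n, InHull R (a + 1) (n - a)) (i : ℕ) : southCount t i ≤ eastCount t i := by
  induction i with
  | zero => simp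
  | succ i ih =>
    rcases hstep : t[i]? with _ | _ | _ <;>
      simp only [eastCount_succ, southCount_succ, hstep, reduceCtorEq, if_true, if_false,
        Option.some.injEq, add_zero]
    · exact ih
    · have hne : southCount t i ≠ eastCount t i := by
        intro heq
        have hnot := h.not_inHull_of_south_step hstep
        have hi := (List.getElem?_eq_some_iff.1 hstep).1
        have hsum := eastCount_add_southCount t i
        have := h.1
        rw [heq] at hnot
        exact hnot (hdiag _ (by omega))
      omega
    · omega

theorem isDyckPath (h : IsHullBorder n t R) (hR : ∀ p ∈ R, p.1 ≤ n)
    (hdiag : ∀ a < n, InHull R (a + 1) (n - a)) : IsDyckPath n t := by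
  refine ⟨h.1, ?_, h.southCount_le_eastCount hdiag⟩
  have hle := h.eastCount_le hR t.length
  have habove := h.southCount_le_eastCount hdiag t.length
  have hsum := eastCount_add_southCount t t.length
  rw [← eastCount_of_length_le le_rfl]
  have := h.1
  omega

theorem exists_vertex_of_mem (h : IsHullBorder n t R) (ht : t.count true = n)
    (hcol : ∀ p ∈ R, 1 ≤ p.1 ∧ p.1 ≤ n) (hrow : ∀ p ∈ R, p.2 ≤ n) {p : ℕ × ℕ} (hp : p ∈ R) :
    ∃ i ≤ 2 * n, p.1 ≤ eastCount t i ∧ southCount t i + p.2 ≤ n := by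
  have hend : eastCount t (2 * n) = n := by rw [eastCount_of_length_le h.1.le, ht]
  obtain ⟨j, hj, heast, hpj⟩ := exists_east_step (hcol p hp).1 ((hcol p hp).2.trans_eq hend.symm)
  have hside := h.left_or_below hrow j p hp
  refine ⟨j + 1, hj, ?_, ?_⟩
  · simp [eastCount_succ, heast, hpj]
  · have : southCount t (j + 1) = southCount t j := by simp [southCount_succ, heast]
    omega

end IsHullBorder

end Hull

section PermPlacement

variable {n : ℕ} {t : List Bool} {π : Equiv.Perm (Fin n)}

theorem mem_permPlacement {p : ℕ × ℕ} :
    p ∈ permPlacement π ↔ ∃ i : Fin n, ((i : ℕ) + 1, (π i : ℕ) + 1) = p := by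
  simp [permPlacement]

theorem forall_mem_permPlacement {P : ℕ × ℕ → Prop} :
    (∀ p ∈ permPlacement π, P p) ↔ ∀ i : Fin n, P ((i : ℕ) + 1, (π i : ℕ) + 1) := by
  simp [permPlacement]

theorem permPlacement_injective : Function.Injective (permPlacement (n := n)) := by
  intro π ρ h
  ext i
  obtain ⟨j, hj⟩ := mem_permPlacement.1 (h ▸ mem_permPlacement.2 ⟨i, rfl⟩)
  simp only [Prod.mk.injEq, add_left_inj, Fin.val_inj] at hj
  obtain ⟨rfl, hval⟩ := hj
  rw [hval]

theorem isFullRookPlacement_permPlacement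
    (hboard : ∀ p ∈ permPlacement π, InBoard n t p.1 p.2) :
    IsFullRookPlacement n t (permPlacement π) := by
  refine ⟨hboard, fun c hc hcn => ?_, fun r hr hrn => ?_⟩
  · obtain ⟨i, rfl⟩ : ∃ i : Fin n, (i : ℕ) + 1 = c := ⟨⟨c - 1, by omega⟩, by simp; omega⟩
    refine ⟨_, ⟨mem_permPlacement.2 ⟨i, rfl⟩, rfl⟩, ?_⟩
    rintro p ⟨hp, hpi⟩
    obtain ⟨j, rfl⟩ := mem_permPlacement.1 hp
    obtain rfl : j = i := Fin.ext (by simpa using hpi)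
    rfl
  · obtain ⟨i, rfl⟩ : ∃ i : Fin n, (π i : ℕ) + 1 = r :=
      ⟨π.symm ⟨r - 1, by omega⟩, by simp; omega⟩
    refine ⟨_, ⟨mem_permPlacement.2 ⟨i, rfl⟩, rfl⟩, ?_⟩
    rintro p ⟨hp, hpi⟩
    obtain ⟨j, rfl⟩ := mem_permPlacement.1 hp
    obtain rfl : j = i := π.injective (Fin.ext (by simpa using hpi))
    rfl

theorem IsFullRookPlacement.exists_eq_permPlacement {R : Finset (ℕ × ℕ)}
    (hR : IsFullRookPlacement n t R) (ht : t.count true ≤ n) :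
    ∃ π : Equiv.Perm (Fin n), R = permPlacement π := by
  obtain ⟨hboard, hcol, hrow⟩ := hR
  have bounds : ∀ p ∈ R, 1 ≤ p.1 ∧ p.1 ≤ n ∧ 1 ≤ p.2 ∧ p.2 ≤ n := by
    intro p hp
    obtain ⟨hc, hr, i, hci, hri⟩ := hboard p hp
    have : (t.take i).count true ≤ t.count true := (List.take_sublist i t).count_le _
    omega
  have row_exists : ∀ i : Fin n, ∃ r : Fin n, ((i : ℕ) + 1, (r : ℕ) + 1) ∈ R := by
    intro i
    obtain ⟨⟨c, r⟩, ⟨hp, rfl⟩, -⟩ := hcol (i + 1) (by omega) (by omega)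
    have := bounds _ hp
    exact ⟨⟨r - 1, by omega⟩, by simpa [show r - 1 + 1 = r by omega] using hp⟩
  choose f hf using row_exists
  have f_injective : Function.Injective f := by
    intro i j hij
    have := (hrow (f i + 1) (by omega) (by omega)).unique ⟨hf i, rfl⟩ ⟨hf j, by rw [hij]⟩
    simpa [Fin.val_inj] using congrArg Prod.fst this
  refine ⟨Equiv.ofBijective f (Finite.injective_iff_bijective.1 f_injective), ?_⟩
  ext p
  rw [mem_permPlacement]
  constructor
  · intro hp
    obtain ⟨hc, hcn, -⟩ := bounds p hp
    obtain ⟨i, hi⟩ : ∃ i : Fin n, (i : ℕ) + 1 = p.1 := ⟨⟨p.1 - 1, by omega⟩, by simp; omega⟩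
    exact ⟨i, (hcol p.1 hc hcn).unique ⟨hf i, hi⟩ ⟨hp, rfl⟩⟩
  · rintro ⟨i, rfl⟩
    exact hf i

/-- Otherwise the rooks of the last `n - a` columns would occupy only `n - a - 1` rows. -/
theorem inHull_permPlacement_diagonal (π : Equiv.Perm (Fin n)) {a : ℕ} (ha : a < n) :
    InHull (permPlacement π) (a + 1) (n - a) := by
  by_contra hout
  have hlow : ∀ i : Fin n, a ≤ i → (π i : ℕ) < n - a - 1 := by
    intro i hi
    by_contra hhigh
    exact hout ⟨_, mem_permPlacement.2 ⟨i, rfl⟩, by simpa using hi, by simp only; omega⟩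
  have hmaps : ∀ i ∈ Finset.Ici (⟨a, ha⟩ : Fin n),
      π i ∈ Finset.Iio (⟨n - a - 1, by omega⟩ : Fin n) := by
    simpa [Fin.le_def, Fin.lt_def] using hlow
  have hcard := Finset.card_le_card_of_injOn π hmaps π.injective.injOn
  rw [Fin.card_Ici, Fin.card_Iio] at hcard
  simp only at hcard
  omega

namespace IsHullBorder

theorem isDyckPath_of_permPlacement (h : IsHullBorder n t (permPlacement π)) : IsDyckPath n t :=
  h.isDyckPath (forall_mem_permPlacement.2 fun i => i.isLt)
    fun _ => inHull_permPlacement_diagonal π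

theorem exists_vertex_of_permPlacement (h : IsHullBorder n t (permPlacement π)) (i : Fin n) :
    ∃ j ≤ 2 * n, (i : ℕ) + 1 ≤ eastCount t j ∧ southCount t j + ((π i : ℕ) + 1) ≤ n :=
  h.exists_vertex_of_mem h.isDyckPath_of_permPlacement.2.1
    (forall_mem_permPlacement.2 fun i => ⟨by simp, i.isLt⟩)
    (forall_mem_permPlacement.2 fun i => (π i).isLt) (mem_permPlacement.2 ⟨i, rfl⟩)

theorem isFullRookPlacement (h : IsHullBorder n t (permPlacement π)) :
    IsFullRookPlacement n t (permPlacement π) := by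
  refine isFullRookPlacement_permPlacement (forall_mem_permPlacement.2 fun i => ?_)
  obtain ⟨j, -, hj⟩ := h.exists_vertex_of_permPlacement i
  exact ⟨by simp, by simp, j, hj⟩

end IsHullBorder

theorem boardMinimal_placement_iff {R : Finset (ℕ × ℕ)} :
    IsDyckPath n t ∧ IsFullRookPlacement n t R ∧ BoardMinimal n t R ↔
      ∃ π : Equiv.Perm (Fin n), R = permPlacement π ∧ IsHullBorder n t R := by
  constructor
  · rintro ⟨ht, hR, hmin⟩
    obtain ⟨π, hπ⟩ := hR.exists_eq_permPlacement ht.2.1.le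
    exact ⟨π, hπ, hmin.isHullBorder ht hR.1⟩
  · rintro ⟨π, rfl, h⟩
    exact ⟨h.isDyckPath_of_permPlacement, h.isFullRookPlacement,
      h.boardMinimal (forall_mem_permPlacement.2 fun i => (π i).isLt)⟩

end PermPlacement

section Pattern

variable {n k : ℕ} {t : List Bool} {π : Equiv.Perm (Fin n)}

/-- The positions `g` carry an occurrence of the pattern `σ` in the permutation `π`. -/
def IsOccurrence (σ : Equiv.Perm (Fin k)) (π : Equiv.Perm (Fin n)) (g : Fin k → Fin n) : Prop :=
  StrictMono g ∧ ∀ a b, σ a < σ b → π (g a) < π (g b)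

/-- The pattern `σ ⊕ 1`, which appends a new maximum to `σ`. -/
def appendMax (σ : Equiv.Perm (Fin k)) : Equiv.Perm (Fin (k + 1)) :=
  finSuccEquivLast.permCongr.symm σ.optionCongr

@[simp]
theorem appendMax_castSucc (σ : Equiv.Perm (Fin k)) (a : Fin k) :
    appendMax σ a.castSucc = (σ a).castSucc := by
  simp [appendMax, Equiv.permCongr_symm]

@[simp]
theorem appendMax_last (σ : Equiv.Perm (Fin k)) :
    appendMax σ (Fin.last k) = Fin.last k := by
  simp [appendMax, Equiv.permCongr_symm]

theorem permContains_appendMax_iff {σ : Equiv.Perm (Fin k)} :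
    PermContains (appendMax σ) π ↔
      ∃ g : Fin k → Fin n, IsOccurrence σ π g ∧ ∃ d, ∀ a, g a < d ∧ π (g a) < π d := by
  constructor
  · rintro ⟨f, hf, hval⟩
    refine ⟨fun a => f a.castSucc, ⟨hf.comp Fin.strictMono_castSucc, fun a b hab => ?_⟩,
      f (Fin.last k), fun a => ⟨hf a.castSucc_lt_last, ?_⟩⟩
    · exact hval _ _ (by simpa using hab)
    · exact hval _ _ (by simp)
  · rintro ⟨g, ⟨hg, hval⟩, d, hd⟩
    refine ⟨Fin.snoc g d, fun a b => ?_, fun a b => ?_⟩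
    · cases a using Fin.lastCases <;> cases b using Fin.lastCases <;>
        simp [hg.lt_iff_lt, hd, Fin.le_last]
    · cases a using Fin.lastCases <;> cases b using Fin.lastCases <;>
        simp +contextual [hval, hd, Fin.le_last]

/-- The top right corner of an occurrence of `σ` in a rectangle is bounded by its last rook and its
highest rook, so it lies in the hull. -/
theorem IsHullBorder.placementContains_iff (h : IsHullBorder n t (permPlacement π))
    {σ : Equiv.Perm (Fin (k + 1))} :
    PlacementContains σ n t (permPlacement π) ↔
      ∃ g : Fin (k + 1) → Fin n, IsOccurrence σ π g ∧ ∃ d, ∀ a, g a ≤ d ∧ π (g a) ≤ π d := by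
  constructor
  · rintro ⟨i, -, f, hrect, hcol, hrow⟩
    choose g hg using fun a => mem_permPlacement.1 (hrect a).1
    obtain rfl : (fun a => ((g a : ℕ) + 1, (π (g a) : ℕ) + 1)) = f := funext hg
    have hocc : IsOccurrence σ π g :=
      ⟨fun a b hab => by simpa using hcol a b hab, fun a b hab => by simpa using hrow a b hab⟩
    have hcorner : InHull (permPlacement π) (g (Fin.last k) + 1)
        (π (g (σ.symm (Fin.last k))) + 1) :=
      h.inHull_of_le (by omega) (hrect (Fin.last k)).2.1 (hrect (σ.symm (Fin.last k))).2.2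
    obtain ⟨p, hp, hpcol, hprow⟩ := hcorner
    obtain ⟨d, rfl⟩ := mem_permPlacement.1 hp
    simp only [add_le_add_iff_right, Fin.val_fin_le] at hpcol hprow
    refine ⟨g, hocc, d, fun a => ⟨(hocc.1.monotone a.le_last).trans hpcol, le_trans ?_ hprow⟩⟩
    obtain hlt | heq := (σ a).le_last.lt_or_eq
    · exact (hocc.2 a _ (by simpa using hlt)).le
    · rw [← heq, Equiv.symm_apply_apply]
  · rintro ⟨g, ⟨hg, hval⟩, d, hd⟩
    obtain ⟨i, hi, hcol, hrow⟩ := h.exists_vertex_of_permPlacement d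
    refine ⟨i, hi, fun a => ((g a : ℕ) + 1, (π (g a) : ℕ) + 1),
      fun a => ⟨mem_permPlacement.2 ⟨g a, rfl⟩, ?_, ?_⟩, fun a b hab => ?_, fun a b hab => ?_⟩
    · exact le_trans (by simpa using (hd a).1) hcol
    · have : (π (g a) : ℕ) ≤ π d := (hd a).2
      change (π (g a) : ℕ) + 1 + southCount t i ≤ n
      omega
    · simpa using hg hab
    · simpa using hval a b hab

theorem IsOccurrence.lt_of_le {σ : Equiv.Perm (Fin (k + 1))} (hσ : σ (Fin.last k) ≠ Fin.last k)
    {g : Fin (k + 1) → Fin n} (hg : IsOccurrence σ π g) {d : Fin n}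
    (hd : ∀ a, g a ≤ d ∧ π (g a) ≤ π d) (a : Fin (k + 1)) : g a < d ∧ π (g a) < π d := by
  suffices hne : g a ≠ d from
    ⟨(hd a).1.lt_of_ne hne, (hd a).2.lt_of_ne (π.injective.ne hne)⟩
  rintro rfl
  obtain rfl : a = Fin.last k :=
    a.le_last.antisymm (hg.1.le_iff_le.1 (hd (Fin.last k)).1)
  have hlt : σ (Fin.last k) < σ (σ.symm (Fin.last k)) := by
    simpa using Fin.lt_last_iff_ne_last.2 hσ
  exact (hg.2 _ _ hlt).not_ge (hd _).2

theorem IsHullBorder.placementContains_iff_permContains_appendMax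
    (h : IsHullBorder n t (permPlacement π)) {σ : Equiv.Perm (Fin (k + 1))}
    (hσ : σ (Fin.last k) ≠ Fin.last k) :
    PlacementContains σ n t (permPlacement π) ↔ PermContains (appendMax σ) π := by
  rw [h.placementContains_iff, permContains_appendMax_iff]
  constructor
  · rintro ⟨g, hg, d, hd⟩
    exact ⟨g, hg, d, hg.lt_of_le hσ hd⟩
  · rintro ⟨g, hg, d, hd⟩
    exact ⟨g, hg, d, fun a => ⟨(hd a).1.le, (hd a).2.le⟩⟩

theorem mem_minPlacements_iff {σ : Equiv.Perm (Fin (k + 1))} (hσ : σ (Fin.last k) ≠ Fin.last k)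
    {R : Finset (ℕ × ℕ)} :
    (t, R) ∈ MinPlacements n σ ↔
      ∃ π : Equiv.Perm (Fin n), R = permPlacement π ∧ IsHullBorder n t R ∧
        PermAvoids (appendMax σ) π := by
  have hassoc : (t, R) ∈ MinPlacements n σ ↔
      (IsDyckPath n t ∧ IsFullRookPlacement n t R ∧ BoardMinimal n t R) ∧
        PlacementAvoids σ n t R := by
    simp only [MinPlacements, Set.mem_ofPred_eq, and_assoc]
  rw [hassoc, boardMinimal_placement_iff]
  constructor
  · rintro ⟨⟨π, rfl, h⟩, havoid⟩
    exact ⟨π, rfl, h, mt (h.placementContains_iff_permContains_appendMax hσ).2 havoid⟩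
  · rintro ⟨π, rfl, h, havoid⟩
    exact ⟨⟨π, rfl, h⟩, mt (h.placementContains_iff_permContains_appendMax hσ).1 havoid⟩

end Pattern

theorem minimal_placements_132_eq_perms_1324_general {k : ℕ} (n : ℕ) (σ : Equiv.Perm (Fin (k + 1)))
    (hσ : σ (Fin.last k) ≠ Fin.last k) :
    (MinPlacements n σ).ncard = scount (appendMax σ) n := by
  have rooks_injOn : Set.InjOn Prod.snd (MinPlacements n σ) := by
    rintro ⟨t, R⟩ ht ⟨s, _⟩ hs rfl
    obtain ⟨-, -, ht, -⟩ := (mem_minPlacements_iff hσ).1 ht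
    obtain ⟨-, -, hs, -⟩ := (mem_minPlacements_iff hσ).1 hs
    rw [(existsUnique_isHullBorder n R).unique ht hs]
  have rooks_image : Prod.snd '' MinPlacements n σ =
      permPlacement '' {π : Equiv.Perm (Fin n) | PermAvoids (appendMax σ) π} := by
    ext R
    constructor
    · rintro ⟨⟨t, R⟩, hmem, rfl⟩
      obtain ⟨π, rfl, -, havoid⟩ := (mem_minPlacements_iff hσ).1 hmem
      exact ⟨π, havoid, rfl⟩
    · rintro ⟨π, havoid, rfl⟩
      obtain ⟨t, ht, -⟩ := existsUnique_isHullBorder n (permPlacement π)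
      exact ⟨(t, _), (mem_minPlacements_iff hσ).2 ⟨π, rfl, ht, havoid⟩, rfl⟩
  rw [← rooks_injOn.ncard_image, rooks_image,
    Set.ncard_image_of_injective _ permPlacement_injective]
  rfl

/-- The number of board-minimal `132`-avoiding full rook placements on
boards of `F_n` equals the number of `1324`-avoiding permutations of `[n]`. -/
theorem minimal_placements_132_eq_perms_1324 (n : ℕ) :
    (MinPlacements n p132).ncard = scount p1324 n := by
  rw [show p1324 = appendMax p132 by decide]
  exact minimal_placements_132_eq_perms_1324_general n p132 (by decide)
end

section
/- Let {σ,τ} be any of the nine pairs of patterns {123,213}, {132,213}, {132,231}, {132,312}, {213,231}, {213,312}, {231,312}, {231,321}, {312,321}. Then for every positive integer n and every Ferrers board F ∈ F_n, the number of matchings of shape F avoiding both σ and τ equals 2^{n − r(F)}, where r(F) is the number of returns of the border path D_F. In particular, all nine pairs are shape-Wilf-equivalent. -/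
/-- The nine pairs of length-3 patterns in shape-Wilf-equivalence class I. -/
def ClassIPair (σ τ : Equiv.Perm (Fin 3)) : Prop :=
  (σ = p123 ∧ τ = p213) ∨ (σ = p132 ∧ τ = p213) ∨ (σ = p132 ∧ τ = p231) ∨
  (σ = p132 ∧ τ = p312) ∨ (σ = p213 ∧ τ = p231) ∨ (σ = p213 ∧ τ = p312) ∨
  (σ = p231 ∧ τ = p312) ∨ (σ = p231 ∧ τ = p321) ∨ (σ = p312 ∧ τ = p321)

/-!
Read a matching of the prescribed shape from left to right. Openers leave no choice, and each closer
chooses one of the `h` arcs that are open at that moment. The first of three arcs to close plays the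
role of the largest value of a pattern, so avoiding `σ` and `τ` means that the choices made so far
impose an order of closing on certain pairs of open arcs. This condition depends only on the
relative order of the openers, so the number of ways to go on depends only on the remaining path and
on a relation between the ranks `0, …, h - 1` of the open arcs.

For each pair the relations that occur can be listed and given weights such that at every closer the
weights of the possible next relations add up to twice the current weight if `h ≥ 2`, and to
the current weight if `h = 1`. The closers with `h = 1` are the returns, and the initial and final
weights are `1`, so there are `2 ^ (n - r)` matchings.

Reversing a matching reverses its shape, preserves the number of returns, and replaces patterns by
their inverses. This reduces `{132, 312}`, `{213, 312}` and `{231, 321}` to other pairs.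
-/

/-! ### Occurrences of a pattern in a matching -/

/-- The openers `p`, `y`, `x` of three arcs, listed in the order in which the arcs close, are
positioned relative to each other as in the pattern `τ`: the arc closing first plays the role of
the largest value of `τ`. -/
def OpenerPattern (τ : Equiv.Perm (Fin 3)) (p y x : ℕ) : Prop :=
  ![x, y, p] (τ 0) < ![x, y, p] (τ 1) ∧ ![x, y, p] (τ 1) < ![x, y, p] (τ 2)

theorem openerPattern_p123 {p y x : ℕ} : OpenerPattern p123 p y x ↔ x < y ∧ y < p := Iff.rfl

theorem openerPattern_p132 {p y x : ℕ} : OpenerPattern p132 p y x ↔ x < p ∧ p < y := Iff.rfl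

theorem openerPattern_p213 {p y x : ℕ} : OpenerPattern p213 p y x ↔ y < x ∧ x < p := Iff.rfl

theorem openerPattern_p231 {p y x : ℕ} : OpenerPattern p231 p y x ↔ y < p ∧ p < x := Iff.rfl

theorem openerPattern_p312 {p y x : ℕ} : OpenerPattern p312 p y x ↔ p < x ∧ x < y := Iff.rfl

theorem openerPattern_p321 {p y x : ℕ} : OpenerPattern p321 p y x ↔ p < y ∧ y < x := Iff.rfl

theorem openerPattern_congr (τ : Equiv.Perm (Fin 3)) {f : ℕ → ℕ} {s : Set ℕ}
    (hf : StrictMonoOn f s) {p y x : ℕ} (hp : p ∈ s) (hy : y ∈ s) (hx : x ∈ s) :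
    OpenerPattern τ (f p) (f y) (f x) ↔ OpenerPattern τ p y x := by
  have lt_iff (u v : Fin 3) :
      ![f x, f y, f p] u < ![f x, f y, f p] v ↔ ![x, y, p] u < ![x, y, p] v := by
    fin_cases u <;> fin_cases v <;> simp [hf.lt_iff_lt, hp, hy, hx]
  simp only [OpenerPattern, lt_iff]

theorem OpenerPattern.ne {τ : Equiv.Perm (Fin 3)} {p y x : ℕ} (h : OpenerPattern τ p y x) :
    y ≠ x := by
  rintro rfl
  have hmono : StrictMono (![y, y, p] ∘ τ) := by
    rw [Fin.strictMono_iff_lt_succ]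
    intro a
    fin_cases a
    exacts [h.1, h.2]
  exact absurd (hmono.injective.of_comp_right τ.surjective |>.eq_iff (a := 0) (b := 1)) (by simp)

theorem strictMono_vec_six {a b c d e f : ℕ} (hab : a < b) (hbc : b < c) (hcd : c < d)
    (hde : d < e) (hef : e < f) : StrictMono (![a, b, c, d, e, f] : Fin (2 * 3) → ℕ) := by
  rw [show StrictMono (![a, b, c, d, e, f] : Fin (2 * 3) → ℕ) ↔ _ from
    Fin.strictMono_iff_lt_succ (n := 5)]
  intro i
  fin_cases i <;> assumption

theorem matchContains_iff {τ : Equiv.Perm (Fin 3)} {M : Finset (ℕ × ℕ)} :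
    MatchContains τ M ↔ ∃ p p' y y' x x', (p, p') ∈ M ∧ (y, y') ∈ M ∧ (x, x') ∈ M ∧
      p < p' ∧ y < p' ∧ x < p' ∧ p' < y' ∧ y' < x' ∧ OpenerPattern τ p y x := by
  constructor
  · rintro ⟨f, hf, hM⟩
    let opener (v : Fin 3) : ℕ := f ⟨(τ.symm v).1, by omega⟩
    have arc (v : Fin 3) : (opener v, f ⟨5 - v.1, by omega⟩) ∈ M := by
      simpa using hM (τ.symm v)
    have opener_lt (v : Fin 3) : opener v < f 3 := hf (Fin.lt_def.mpr (τ.symm v).isLt)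
    have opener_eq (a : Fin 3) :
        ![opener 0, opener 1, opener 2] (τ a) = f ⟨a.1, by omega⟩ := by
      have (v : Fin 3) : ![opener 0, opener 1, opener 2] v = opener v := by fin_cases v <;> rfl
      simp [this, opener]
    refine ⟨_, _, _, _, _, _, arc 2, arc 1, arc 0, opener_lt 2, opener_lt 1, opener_lt 0,
      hf (by decide), hf (by decide), ?_⟩
    simp only [OpenerPattern, opener_eq]
    exact ⟨hf (by decide), hf (by decide)⟩
  · rintro ⟨p, p', y, y', x, x', hp, hy, hx, hpp', hyp', hxp', hp'y', hy'x', h01, h12⟩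
    have opener_lt (v : Fin 3) : ![x, y, p] v < p' := by fin_cases v <;> assumption
    have closer_eq (o : Fin 3 → ℕ) (v : Fin 3) :
        (![o 0, o 1, o 2, p', y', x'] : Fin (2 * 3) → ℕ) ⟨2 * 3 - 1 - v.1, by omega⟩ =
          ![x', y', p'] v := by
      fin_cases v <;> rfl
    refine ⟨_, strictMono_vec_six h01 h12 (opener_lt _) hp'y' hy'x', fun a => ?_⟩
    have arc (v : Fin 3) : (![x, y, p] v, ![x', y', p'] v) ∈ M := by fin_cases v <;> assumption
    convert arc (τ a) using 2
    · fin_cases a <;> rfl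
    · exact closer_eq (fun b => ![x, y, p] (τ b)) (τ a)

/-- `t` has the letter `c` at the point `x`, points being numbered from `1`: the point `x` is an
opener for `c = true` and a closer for `c = false`. -/
def LetterAt (t : List Bool) (c : Bool) (x : ℕ) : Prop := ∃ i, x = i + 1 ∧ t[i]? = some c

theorem letterAt_succ {t : List Bool} {c : Bool} {i : ℕ} :
    LetterAt t c (i + 1) ↔ t[i]? = some c := by
  simp [LetterAt]

theorem LetterAt.not_true_of_false {t : List Bool} {x : ℕ} (hx : LetterAt t false x) :
    ¬ LetterAt t true x := by
  obtain ⟨i, rfl, hi⟩ := hx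
  simp [letterAt_succ, hi]

theorem LetterAt.one_le {t : List Bool} {c : Bool} {x : ℕ} (hx : LetterAt t c x) : 1 ≤ x := by
  obtain ⟨i, rfl, -⟩ := hx
  omega

theorem exists_letterAt {t : List Bool} {x : ℕ} (hx : 1 ≤ x) (hxt : x ≤ t.length) :
    ∃ c, LetterAt t c x := by
  obtain ⟨i, rfl⟩ : ∃ i, x = i + 1 := ⟨x - 1, by omega⟩
  exact ⟨t[i], i, rfl, List.getElem?_eq_getElem hxt⟩

section PerfectMatching

variable {n : ℕ} {M : Finset (ℕ × ℕ)} {a b x y : ℕ}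

theorem IsPerfectMatching.bounds (hM : IsPerfectMatching n M) (hab : (a, b) ∈ M) :
    1 ≤ a ∧ a < b ∧ b ≤ 2 * n :=
  have ⟨hlt, h1, h2⟩ := hM.1 _ hab
  ⟨h1, hlt, h2⟩

theorem IsPerfectMatching.arc_unique {p q : ℕ × ℕ} (hM : IsPerfectMatching n M) (hp : p ∈ M)
    (hq : q ∈ M) (hpx : p.1 = x ∨ p.2 = x) (hqx : q.1 = x ∨ q.2 = x) : p = q := by
  have hx : 1 ≤ x ∧ x ≤ 2 * n := by have := hM.1 p hp; omega
  exact (hM.2 x hx.1 hx.2).unique ⟨hp, hpx⟩ ⟨hq, hqx⟩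

theorem IsPerfectMatching.closer_unique (hM : IsPerfectMatching n M) (hx : (a, x) ∈ M)
    (hy : (a, y) ∈ M) : x = y :=
  congrArg Prod.snd (hM.arc_unique hx hy (.inl rfl) (.inl rfl))

theorem IsPerfectMatching.opener_unique (hM : IsPerfectMatching n M) (hx : (x, b) ∈ M)
    (hy : (y, b) ∈ M) : x = y :=
  congrArg Prod.fst (hM.arc_unique hx hy (.inr rfl) (.inr rfl))

theorem letterAt_shapeOf {c : Bool} : LetterAt (shapeOf n M) c x ↔
    1 ≤ x ∧ x ≤ 2 * n ∧ (c = true ↔ ∃ b, (x, b) ∈ M) := by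
  cases x with
  | zero => simp [LetterAt]
  | succ i => cases c <;> simp [letterAt_succ, shapeOf, List.getElem?_eq_some_iff]

theorem length_shapeOf : (shapeOf n M).length = 2 * n := by
  simp [shapeOf]

theorem letterAt_true_shapeOf (hM : IsPerfectMatching n M) :
    LetterAt (shapeOf n M) true x ↔ ∃ b, (x, b) ∈ M := by
  refine letterAt_shapeOf.trans ⟨fun h => h.2.2.1 rfl, fun ⟨b, hb⟩ => ?_⟩
  have := hM.bounds hb
  exact ⟨by omega, by omega, fun _ => ⟨b, hb⟩, fun _ => rfl⟩

theorem letterAt_false_shapeOf (hM : IsPerfectMatching n M) :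
    LetterAt (shapeOf n M) false x ↔ ∃ a, (a, x) ∈ M := by
  rw [letterAt_shapeOf]
  constructor
  · rintro ⟨h1, h2, hx⟩
    obtain ⟨⟨a, b⟩, ⟨hab, rfl | rfl⟩, -⟩ := hM.2 x h1 h2
    · exact absurd (hx.2 ⟨b, hab⟩) (by decide)
    · exact ⟨a, hab⟩
  · rintro ⟨a, ha⟩
    have := hM.bounds ha
    refine ⟨by omega, by omega, (nomatch ·), fun ⟨b, hb⟩ => ?_⟩
    have := congrArg Prod.fst (hM.arc_unique ha hb (.inr rfl) (.inl rfl))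
    omega

theorem shapeOf_eq_iff {t : List Bool} (hM : IsPerfectMatching n M) (ht : t.length = 2 * n) :
    shapeOf n M = t ↔ ∀ a b, (a, b) ∈ M → LetterAt t true a ∧ LetterAt t false b := by
  constructor
  · rintro rfl a b hab
    exact ⟨(letterAt_true_shapeOf hM).2 ⟨b, hab⟩, (letterAt_false_shapeOf hM).2 ⟨a, hab⟩⟩
  · intro h
    refine List.ext_getElem? fun i => ?_
    rcases lt_or_ge i (2 * n) with hi | hi
    · obtain ⟨c, hc⟩ := exists_letterAt (t := shapeOf n M) i.succ_pos (by rwa [length_shapeOf])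
      rw [letterAt_succ.1 hc, eq_comm, ← letterAt_succ]
      cases c with
      | true =>
        obtain ⟨b, hb⟩ := (letterAt_true_shapeOf hM).1 hc
        exact (h _ _ hb).1
      | false =>
        obtain ⟨a, ha⟩ := (letterAt_false_shapeOf hM).1 hc
        exact (h _ _ ha).2
    · rw [List.getElem?_eq_none (by rwa [length_shapeOf]), List.getElem?_eq_none (by rwa [ht])]

end PerfectMatching

/-- The perfect matchings of `[2n]` of shape `t` that avoid both `σ` and `τ`. -/
def avoiders {k : ℕ} (σ τ : Equiv.Perm (Fin k)) (n : ℕ) (t : List Bool) :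
    Set (Finset (ℕ × ℕ)) :=
  {M | IsPerfectMatching n M ∧ MatchAvoids σ M ∧ MatchAvoids τ M ∧ shapeOf n M = t}

theorem finite_avoiders {k : ℕ} (σ τ : Equiv.Perm (Fin k)) (n : ℕ) (t : List Bool) :
    (avoiders σ τ n t).Finite := by
  refine (Finset.finite_toSet (Finset.Icc (1, 1) (2 * n, 2 * n)).powerset).subset ?_
  rintro M ⟨hM, -⟩
  refine Finset.mem_coe.2 (Finset.mem_powerset.2 fun ⟨a, b⟩ hab => ?_)
  have := hM.bounds hab
  exact Finset.mem_Icc.2 ⟨⟨by omega, by omega⟩, ⟨by omega, by omega⟩⟩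

/-! ### Prefixes and their completions -/

/-- The restriction that the arc closing first, with opener `p`, puts on openers `y`, `x` that are
open at that time: the arc of `x` has to close before the arc of `y`. -/
def Forbids (σ τ : Equiv.Perm (Fin 3)) (p y x : ℕ) : Prop :=
  OpenerPattern σ p y x ∨ OpenerPattern τ p y x

theorem forbids_congr (σ τ : Equiv.Perm (Fin 3)) {f : ℕ → ℕ} {s : Set ℕ}
    (hf : StrictMonoOn f s) {p y x : ℕ} (hp : p ∈ s) (hy : y ∈ s) (hx : x ∈ s) :
    Forbids σ τ (f p) (f y) (f x) ↔ Forbids σ τ p y x := by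
  simp only [Forbids, openerPattern_congr _ hf hp hy hx]

theorem Forbids.ne {σ τ : Equiv.Perm (Fin 3)} {p y x : ℕ} (h : Forbids σ τ p y x) : y ≠ x :=
  h.elim OpenerPattern.ne OpenerPattern.ne

/-- The arcs of `N` force the arc of `x` to close before the arc of `y`. -/
def Precedes (σ τ : Equiv.Perm (Fin 3)) (N : Finset (ℕ × ℕ)) (y x : ℕ) : Prop :=
  ∃ p p', (p, p') ∈ N ∧ y < p' ∧ x < p' ∧ Forbids σ τ p y x

/-- `N` is the set of arcs closing among the first `i` points of the path `t`, and it does not yet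
violate the restrictions coming from the patterns `σ` and `τ`. -/
structure IsAvoidingPrefix (σ τ : Equiv.Perm (Fin 3)) (t : List Bool) (i : ℕ)
    (N : Finset (ℕ × ℕ)) : Prop where
  lt : ∀ {a b}, (a, b) ∈ N → a < b
  le : ∀ {a b}, (a, b) ∈ N → b ≤ i
  opener : ∀ {a b}, (a, b) ∈ N → LetterAt t true a
  closer : ∀ {a b}, (a, b) ∈ N → LetterAt t false b
  exists_opener : ∀ {b}, b ≤ i → LetterAt t false b → ∃ a, (a, b) ∈ N
  opener_unique : ∀ {a a' b}, (a, b) ∈ N → (a', b) ∈ N → a = a'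
  closer_unique : ∀ {a b b'}, (a, b) ∈ N → (a, b') ∈ N → b = b'
  closes_before : ∀ {p p' y y' x}, (p, p') ∈ N → (y, y') ∈ N → LetterAt t true x → p' < y' →
    y < p' → x < p' → Forbids σ τ p y x → ∃ x', x' < y' ∧ (x, x') ∈ N

/-- `x` is an opener among the first `i` points of `t` whose arc does not belong to `N`. -/
def IsPending (t : List Bool) (i : ℕ) (N : Finset (ℕ × ℕ)) (x : ℕ) : Prop :=
  LetterAt t true x ∧ x ≤ i ∧ ∀ b, (x, b) ∉ N

/-- The matchings in `avoiders σ τ n t` whose arcs closing among the first `i` points form `N`. -/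
def completions (σ τ : Equiv.Perm (Fin 3)) (n : ℕ) (t : List Bool) (i : ℕ)
    (N : Finset (ℕ × ℕ)) : Set (Finset (ℕ × ℕ)) :=
  {M ∈ avoiders σ τ n t | M.filter (·.2 ≤ i) = N}

section Prefix

variable {σ τ : Equiv.Perm (Fin 3)} {n i : ℕ} {t : List Bool} {M N : Finset (ℕ × ℕ)}

theorem matchAvoids_and_iff :
    MatchAvoids σ M ∧ MatchAvoids τ M ↔ ¬ ∃ p p' y y' x x', (p, p') ∈ M ∧ (y, y') ∈ M ∧
      (x, x') ∈ M ∧ p < p' ∧ y < p' ∧ x < p' ∧ p' < y' ∧ y' < x' ∧ Forbids σ τ p y x := by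
  simp only [MatchAvoids, matchContains_iff, Forbids, and_or_left, exists_or, not_or]

theorem closes_before_of_mem_avoiders (hM : M ∈ avoiders σ τ n t) {p p' y y' x x' : ℕ}
    (hp : (p, p') ∈ M) (hy : (y, y') ∈ M) (hx : (x, x') ∈ M) (hpy : p' < y') (hyp : y < p')
    (hxp : x < p') (hF : Forbids σ τ p y x) : x' < y' := by
  obtain ⟨hperf, hσ, hτ, -⟩ := hM
  by_contra! hyx
  rcases hyx.eq_or_lt with rfl | hyx
  · exact hF.ne (hperf.opener_unique hy hx)
  · exact matchAvoids_and_iff.1 ⟨hσ, hτ⟩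
      ⟨p, p', y, y', x, x', hp, hy, hx, hperf.bounds hp |>.2.1, hyp, hxp, hpy, hyx, hF⟩

theorem exists_closer_of_mem_avoiders (hM : M ∈ avoiders σ τ n t) {x : ℕ}
    (hx : LetterAt t true x) : ∃ x', (x, x') ∈ M := by
  obtain ⟨hperf, -, -, rfl⟩ := hM
  exact (letterAt_true_shapeOf hperf).1 hx

theorem letterAt_of_mem_avoiders (hM : M ∈ avoiders σ τ n t) {a b : ℕ} (hab : (a, b) ∈ M) :
    LetterAt t true a ∧ LetterAt t false b := by
  obtain ⟨hperf, -, -, rfl⟩ := hM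
  exact (shapeOf_eq_iff hperf length_shapeOf).1 rfl a b hab

theorem IsAvoidingPrefix.mem_avoiders (hN : IsAvoidingPrefix σ τ t (2 * n) N)
    (ht : t.length = 2 * n) (hpending : ∀ x, ¬ IsPending t (2 * n) N x) : N ∈ avoiders σ τ n t := by
  have hperf : IsPerfectMatching n N := by
    refine ⟨fun ⟨a, b⟩ hab => ⟨hN.lt hab, (hN.opener hab).one_le, hN.le hab⟩, fun x h1 h2 => ?_⟩
    obtain ⟨c, hc⟩ := exists_letterAt h1 (ht ▸ h2)
    cases c with
    | true =>
      obtain ⟨b, hb⟩ : ∃ b, (x, b) ∈ N := by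
        by_contra! h
        exact hpending x ⟨hc, h2, h⟩
      refine ⟨(x, b), ⟨hb, .inl rfl⟩, fun ⟨a', b'⟩ ⟨h, hx⟩ => ?_⟩
      rcases hx with rfl | rfl
      · rw [hN.closer_unique hb h]
      · exact absurd hc (hN.closer h).not_true_of_false
    | false =>
      obtain ⟨a, ha⟩ := hN.exists_opener h2 hc
      refine ⟨(a, x), ⟨ha, .inr rfl⟩, fun ⟨a', b'⟩ ⟨h, hx⟩ => ?_⟩
      rcases hx with rfl | rfl
      · exact absurd (hN.opener h) hc.not_true_of_false
      · rw [hN.opener_unique ha h]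
  have havoid : MatchAvoids σ N ∧ MatchAvoids τ N := by
    rw [matchAvoids_and_iff]
    rintro ⟨p, p', y, y', x, x', hp, hy, hx, -, hyp, hxp, hpy, hyx, hF⟩
    obtain ⟨x'', hlt, hx'⟩ := hN.closes_before hp hy (hN.opener hx) hpy hyp hxp hF
    exact hlt.not_gt (hN.closer_unique hx hx' ▸ hyx)
  exact ⟨hperf, havoid.1, havoid.2,
    (shapeOf_eq_iff hperf ht).2 fun a b hab => ⟨hN.opener hab, hN.closer hab⟩⟩

theorem completions_zero : completions σ τ n t 0 ∅ = avoiders σ τ n t := by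
  refine Set.sep_eq_self_iff_mem_true.2 fun M hM => Finset.filter_eq_empty_iff.2 ?_
  rintro ⟨a, b⟩ hab
  have := hM.1.bounds hab
  simp only
  omega

theorem IsAvoidingPrefix.completions_eq_singleton (hN : IsAvoidingPrefix σ τ t (2 * n) N)
    (ht : t.length = 2 * n) (hpending : ∀ x, ¬ IsPending t (2 * n) N x) :
    completions σ τ n t (2 * n) N = {N} := by
  have filter_eq {M : Finset (ℕ × ℕ)} (hM : M ∈ avoiders σ τ n t) :
      M.filter (·.2 ≤ 2 * n) = M :=
    Finset.filter_true_of_mem fun q hq => (hM.1.bounds hq).2.2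
  refine Set.eq_singleton_iff_unique_mem.2 ⟨⟨hN.mem_avoiders ht hpending, ?_⟩, ?_⟩
  · exact filter_eq (hN.mem_avoiders ht hpending)
  · rintro M ⟨hM, hMN⟩
    rw [← hMN, filter_eq hM]

theorem mem_iff_of_mem_completions (hM : M ∈ completions σ τ n t i N) {a b : ℕ} :
    (a, b) ∈ N ↔ (a, b) ∈ M ∧ b ≤ i := by
  rw [← hM.2, Finset.mem_filter]

theorem completions_succ_of_opener (hi : t[i]? = some true) :
    completions σ τ n t (i + 1) N = completions σ τ n t i N := by
  ext M
  refine and_congr_right fun hM => Eq.congr_left ?_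
  refine Finset.filter_congr fun ⟨a, b⟩ hab => ?_
  have : b ≠ i + 1 := by
    rintro rfl
    exact (letterAt_of_mem_avoiders hM hab).2.not_true_of_false (letterAt_succ.2 hi)
  simp only
  omega

theorem mem_completions_succ_insert (hN : IsAvoidingPrefix σ τ t i N) {a : ℕ} :
    M ∈ completions σ τ n t (i + 1) (insert (a, i + 1) N) ↔
      M ∈ completions σ τ n t i N ∧ (a, i + 1) ∈ M := by
  simp only [completions, Set.mem_sep_iff, and_assoc]
  refine and_congr_right fun hM => ?_
  constructor
  · intro h
    have mem_iff (q : ℕ × ℕ) : q ∈ M ∧ q.2 ≤ i + 1 ↔ q = (a, i + 1) ∨ q ∈ N := by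
      rw [← Finset.mem_insert, ← h, Finset.mem_filter]
    refine ⟨?_, ((mem_iff _).2 (.inl rfl)).1⟩
    ext q
    rw [Finset.mem_filter]
    constructor
    · rintro ⟨hq, hqi⟩
      rcases (mem_iff q).1 ⟨hq, by omega⟩ with rfl | hqN
      · simp at hqi
      · exact hqN
    · exact fun hq => ⟨((mem_iff q).2 (.inr hq)).1, hN.le hq⟩
  · rintro ⟨rfl, ha⟩
    ext ⟨b, c⟩
    simp only [Finset.mem_filter, Finset.mem_insert, Prod.mk.injEq]
    constructor
    · rintro ⟨hq, hqi⟩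
      rcases hqi.eq_or_lt with rfl | hqi
      · exact .inl ⟨hM.1.opener_unique hq ha, rfl⟩
      · exact .inr ⟨hq, by omega⟩
    · rintro (⟨rfl, rfl⟩ | ⟨hq, hqi⟩)
      · exact ⟨ha, le_rfl⟩
      · exact ⟨hq, by omega⟩

theorem exists_opener_of_mem_completions (hN : IsAvoidingPrefix σ τ t i N)
    (hi : t[i]? = some false) (hM : M ∈ completions σ τ n t i N) :
    ∃ a, IsPending t i N a ∧ (a, i + 1) ∈ M := by
  obtain ⟨a, ha⟩ : ∃ a, (a, i + 1) ∈ M := by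
    obtain ⟨hperf, -, -, rfl⟩ := hM.1
    exact (letterAt_false_shapeOf hperf).1 (letterAt_succ.2 hi)
  have hlt := (hM.1.1.bounds ha).2.1
  refine ⟨a, ⟨(letterAt_of_mem_avoiders hM.1 ha).1, by omega, fun b hb => ?_⟩, ha⟩
  have := hM.1.1.closer_unique ha ((mem_iff_of_mem_completions hM).1 hb).1
  have := hN.le hb
  omega

theorem completions_subset_avoiders : completions σ τ n t i N ⊆ avoiders σ τ n t :=
  Set.sep_subset _ _

theorem ncard_completions_eq_sum (hN : IsAvoidingPrefix σ τ t i N) (hi : t[i]? = some false)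
    {o : ℕ → ℕ} {h : ℕ} (ho : Set.InjOn o (Set.Iio h))
    (hpending : ∀ x, IsPending t i N x ↔ ∃ a < h, o a = x) :
    (completions σ τ n t i N).ncard =
      ∑ j ∈ Finset.range h, (completions σ τ n t (i + 1) (insert (o j, i + 1) N)).ncard := by
  have hunion : completions σ τ n t i N =
      ⋃ j ∈ (Finset.range h : Set ℕ), completions σ τ n t (i + 1) (insert (o j, i + 1) N) := by
    ext M
    simp only [Set.mem_iUnion, mem_completions_succ_insert hN, Finset.coe_range, Set.mem_Iio,
      exists_prop]
    constructor
    · intro hM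
      obtain ⟨a, ha, haM⟩ := exists_opener_of_mem_completions hN hi hM
      obtain ⟨j, hj, rfl⟩ := (hpending a).1 ha
      exact ⟨j, hj, hM, haM⟩
    · rintro ⟨j, -, hM, -⟩
      exact hM
  rw [hunion, (Finset.finite_toSet _).ncard_biUnion, finsum_mem_coe_finset]
  · exact fun j _ => (finite_avoiders σ τ n t).subset completions_subset_avoiders
  · intro j hj k hk hjk
    refine Set.disjoint_left.2 fun M hMj hMk => hjk (ho (by simpa using hj) (by simpa using hk) ?_)
    rw [mem_completions_succ_insert hN] at hMj hMk
    exact hMj.1.1.1.opener_unique hMj.2 hMk.2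

theorem completions_succ_insert_eq_empty_of_precedes (hN : IsAvoidingPrefix σ τ t i N) {x y : ℕ}
    (hx : IsPending t i N x) (hyx : Precedes σ τ N y x) :
    completions σ τ n t (i + 1) (insert (y, i + 1) N) = ∅ := by
  refine Set.eq_empty_of_forall_notMem fun M hM => ?_
  rw [mem_completions_succ_insert hN] at hM
  obtain ⟨hMN, hy⟩ := hM
  obtain ⟨p, p', hp, hyp, hxp, hF⟩ := hyx
  obtain ⟨x', hx'⟩ := exists_closer_of_mem_avoiders hMN.1 hx.1
  have hp' := hN.le hp
  have hlt := closes_before_of_mem_avoiders hMN.1 ((mem_iff_of_mem_completions hMN).1 hp).1 hy hx'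
    (by omega) hyp hxp hF
  exact hx.2.2 x' ((mem_iff_of_mem_completions hMN).2 ⟨hx', by omega⟩)

theorem completions_eq_empty_of_precedes_precedes {x y : ℕ}
    (hx : IsPending t i N x) (hy : IsPending t i N y) (hyx : Precedes σ τ N y x)
    (hxy : Precedes σ τ N x y) : completions σ τ n t i N = ∅ := by
  refine Set.eq_empty_of_forall_notMem fun M hM => ?_
  have closer_lt {u v u' v' : ℕ} (hu : IsPending t i N u) (hu' : (u, u') ∈ M) (hv' : (v, v') ∈ M)
      (huv : Precedes σ τ N u v) : v' < u' := by
    obtain ⟨p, p', hp, hup, hvp, hF⟩ := huv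
    have hpM := (mem_iff_of_mem_completions hM).1 hp
    have hui : i < u' := by
      by_contra! hle
      exact hu.2.2 u' ((mem_iff_of_mem_completions hM).2 ⟨hu', hle⟩)
    exact closes_before_of_mem_avoiders hM.1 hpM.1 hu' hv' (by omega) hup hvp hF
  obtain ⟨x', hx'⟩ := exists_closer_of_mem_avoiders hM.1 hx.1
  obtain ⟨y', hy'⟩ := exists_closer_of_mem_avoiders hM.1 hy.1
  exact (closer_lt hx hx' hy' hxy).not_gt (closer_lt hy hy' hx' hyx)

theorem IsAvoidingPrefix.of_opener (hN : IsAvoidingPrefix σ τ t i N) (hi : t[i]? = some true) :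
    IsAvoidingPrefix σ τ t (i + 1) N where
  __ := hN
  le hab := (hN.le hab).trans i.le_succ
  exists_opener {b} hb hbt := by
    rcases hb.eq_or_lt with rfl | hb
    · exact absurd (letterAt_succ.2 hi) hbt.not_true_of_false
    · exact hN.exists_opener (by omega) hbt

theorem isPending_succ_of_opener (hN : IsAvoidingPrefix σ τ t i N) (hi : t[i]? = some true)
    {x : ℕ} : IsPending t (i + 1) N x ↔ IsPending t i N x ∨ x = i + 1 := by
  constructor
  · rintro ⟨hx, hxi, hxN⟩
    rcases hxi.eq_or_lt with rfl | hxi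
    · exact .inr rfl
    · exact .inl ⟨hx, by omega, hxN⟩
  · rintro (⟨hx, hxi, hxN⟩ | rfl)
    · exact ⟨hx, by omega, hxN⟩
    · refine ⟨letterAt_succ.2 hi, le_rfl, fun b hb => ?_⟩
      have := hN.lt hb
      have := hN.le hb
      omega

theorem IsAvoidingPrefix.closes_before_insert (hN : IsAvoidingPrefix σ τ t i N) {a : ℕ}
    (hfree : ∀ x, IsPending t i N x → ¬ Precedes σ τ N a x) {p p' y y' x : ℕ}
    (hp : (p, p') ∈ insert (a, i + 1) N) (hy : (y, y') ∈ insert (a, i + 1) N)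
    (hx : LetterAt t true x) (hpy : p' < y') (hyp : y < p') (hxp : x < p')
    (hF : Forbids σ τ p y x) : ∃ x', x' < y' ∧ (x, x') ∈ insert (a, i + 1) N := by
  have hpN : (p, p') ∈ N := by
    have := @hN.le
    grind
  rcases Finset.mem_insert.1 hy with hy | hy
  · obtain ⟨rfl, rfl⟩ := Prod.mk.inj hy
    obtain ⟨x', hx'⟩ : ∃ x', (x, x') ∈ N := by
      by_contra! hxN
      have := hN.le hpN
      exact hfree x ⟨hx, by omega, hxN⟩ ⟨p, p', hpN, hyp, hxp, hF⟩
    exact ⟨x', Nat.lt_succ_of_le (hN.le hx'), Finset.mem_insert_of_mem hx'⟩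
  · obtain ⟨x', hlt, hx'⟩ := hN.closes_before hpN hy hx hpy hyp hxp hF
    exact ⟨x', hlt, Finset.mem_insert_of_mem hx'⟩

theorem IsAvoidingPrefix.insert_of_closer (hN : IsAvoidingPrefix σ τ t i N)
    (hi : t[i]? = some false) {a : ℕ} (ha : IsPending t i N a)
    (hfree : ∀ x, IsPending t i N x → ¬ Precedes σ τ N a x) :
    IsAvoidingPrefix σ τ t (i + 1) (insert (a, i + 1) N) where
  lt h := by
    have := ha.2.1
    have := @hN.lt
    grind
  le h := by
    have := @hN.le
    grind
  opener h := by
    have := ha.1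
    have := @hN.opener
    grind
  closer h := by
    have := letterAt_succ.2 hi
    have := @hN.closer
    grind
  exists_opener {b} hb hbt := by
    rcases hb.eq_or_lt with rfl | hb
    · exact ⟨a, Finset.mem_insert_self _ _⟩
    · obtain ⟨c, hc⟩ := hN.exists_opener (by omega) hbt
      exact ⟨c, Finset.mem_insert_of_mem hc⟩
  opener_unique {b b' c} h h' := by
    have := @hN.le
    have := @hN.opener_unique
    grind
  closer_unique {b c c'} h h' := by
    have := ha.2.2
    have := @hN.closer_unique
    grind
  closes_before := hN.closes_before_insert hfree

theorem isPending_succ_insert (hi : t[i]? = some false) {a x : ℕ} :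
    IsPending t (i + 1) (insert (a, i + 1) N) x ↔ IsPending t i N x ∧ x ≠ a := by
  have hne (hx : LetterAt t true x) : x ≠ i + 1 := by
    rintro rfl
    exact (letterAt_succ.2 hi).not_true_of_false hx
  simp only [IsPending, Finset.mem_insert, Prod.mk.injEq, not_or, not_and, forall_and]
  constructor
  · rintro ⟨hx, hxi, hxa, hxN⟩
    exact ⟨⟨hx, by have := hne hx; omega, hxN⟩, fun h => hxa _ h rfl⟩
  · rintro ⟨⟨hx, hxi, hxN⟩, hxa⟩
    exact ⟨hx, by omega, fun _ h => absurd h hxa, hxN⟩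

theorem precedes_insert {a y x : ℕ} (hy : y ≤ i) (hx : x ≤ i) :
    Precedes σ τ (insert (a, i + 1) N) y x ↔ Precedes σ τ N y x ∨ Forbids σ τ a y x := by
  constructor
  · rintro ⟨p, p', hp, hyp, hxp, hF⟩
    rcases Finset.mem_insert.1 hp with hp | hp
    · obtain ⟨rfl, rfl⟩ := Prod.mk.inj hp
      exact .inr hF
    · exact .inl ⟨p, p', hp, hyp, hxp, hF⟩
  · rintro (⟨p, p', hp, hyp, hxp, hF⟩ | hF)
    · exact ⟨p, p', Finset.mem_insert_of_mem hp, hyp, hxp, hF⟩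
    · exact ⟨a, i + 1, Finset.mem_insert_self _ _, by omega, by omega, hF⟩

end Prefix

/-! ### States and weights -/

/-- The order embedding of `ℕ` into `ℕ` that misses exactly `j`: the old rank of the opener of rank
`a` once the opener of rank `j` has been removed. -/
def skip (j a : ℕ) : ℕ := if a < j then a else a + 1

theorem skip_strictMono (j : ℕ) : StrictMono (skip j) := by
  intro a b hab
  unfold skip
  split_ifs <;> omega

theorem skip_lt {h j a : ℕ} (ha : a < h) : skip j a < h + 1 := by
  unfold skip
  split_ifs <;> omega

theorem exists_skip_eq_iff {h j b : ℕ} (hj : j < h + 1) :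
    (∃ a < h, skip j a = b) ↔ b < h + 1 ∧ b ≠ j := by
  constructor
  · rintro ⟨a, ha, rfl⟩
    refine ⟨skip_lt ha, ?_⟩
    unfold skip
    split_ifs <;> omega
  · rintro ⟨hb, hbj⟩
    rcases hbj.lt_or_gt with hbj | hbj
    · exact ⟨b, by omega, if_pos hbj⟩
    · exact ⟨b - 1, by omega, by rw [skip, if_neg] <;> omega⟩

/-- The relation `ρ` between ranks of open arcs (`ρ b a` if the arc of rank `a` has to close before
the arc of rank `b`), together with the restrictions imposed by closing the arc of rank `j`. -/
def closeRel (σ τ : Equiv.Perm (Fin 3)) (j : ℕ) (ρ : ℕ → ℕ → Prop) (b a : ℕ) : Prop :=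
  ρ b a ∨ Forbids σ τ j b a

/-- With `h + 1` open arcs subject to the relation `ρ`, the arc of rank `j` may not be closed next:
either some other arc has to close first, or two of the remaining ones would each have to close
before the other. -/
def Infeasible (σ τ : Equiv.Perm (Fin 3)) (h : ℕ) (ρ : ℕ → ℕ → Prop) (j : ℕ) : Prop :=
  (∃ a < h + 1, ρ j a) ∨
    ∃ a < h + 1, ∃ b < h + 1, a ≠ j ∧ b ≠ j ∧ closeRel σ τ j ρ a b ∧ closeRel σ τ j ρ b a

/-- `S h ρ W` says that `W` is the weight of the state formed by `h` open arcs and the relation `ρ`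
between their ranks. In the states reachable from `S 0 ∅ 1`, the weights of the possible next states
add up to twice the weight of the current one whenever an arc closes that is not the last open
one. -/
structure IsWeight (σ τ : Equiv.Perm (Fin 3)) (S : ℕ → (ℕ → ℕ → Prop) → ℚ → Prop) : Prop where
  start : S 0 (fun _ _ => False) 1
  eq_one : ∀ {ρ W}, S 0 ρ W → W = 1
  lt_of_rel : ∀ {h ρ W b a}, S h ρ W → ρ b a → b < h ∧ a < h
  opener : ∀ {h ρ W}, S h ρ W → S (h + 1) ρ W
  closer : ∀ {h ρ W}, S (h + 1) ρ W → ∃ V : ℕ → ℚ,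
    ∑ j ∈ Finset.range (h + 1), V j = (if h = 0 then 1 else 2) * W ∧
    ∀ j < h + 1, (V j = 0 ∧ Infeasible σ τ h ρ j) ∨
      ((∀ a < h + 1, ¬ ρ j a) ∧
        ∃ ρ', S h ρ' (V j) ∧ ∀ b < h, ∀ a < h, (ρ' b a ↔ closeRel σ τ j ρ (skip j b) (skip j a)))

/-- After `i` points of the path `t`, with set of closed arcs `N`, the open arcs are those with
openers `o 0 < ⋯ < o (h - 1)`, and `ρ` is the relation `Precedes` in terms of ranks. -/
structure IsState (σ τ : Equiv.Perm (Fin 3)) (t : List Bool) (i : ℕ) (N : Finset (ℕ × ℕ))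
    (o : ℕ → ℕ) (h : ℕ) (ρ : ℕ → ℕ → Prop) : Prop where
  isAvoidingPrefix : IsAvoidingPrefix σ τ t i N
  strictMonoOn : StrictMonoOn o (Set.Iio h)
  isPending_iff : ∀ x, IsPending t i N x ↔ ∃ a < h, o a = x
  rel_iff : ∀ b < h, ∀ a < h, (ρ b a ↔ Precedes σ τ N (o b) (o a))

section State

variable {σ τ : Equiv.Perm (Fin 3)} {t : List Bool} {i h : ℕ} {N : Finset (ℕ × ℕ)} {o : ℕ → ℕ}
  {ρ : ℕ → ℕ → Prop}

theorem IsState.isPending (hN : IsState σ τ t i N o h ρ) {a : ℕ} (ha : a < h) :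
    IsPending t i N (o a) :=
  (hN.isPending_iff _).2 ⟨a, ha, rfl⟩

theorem isState_zero : IsState σ τ t 0 ∅ id 0 (fun _ _ => False) where
  isAvoidingPrefix := by
    have {b : ℕ} (hb : LetterAt t false b) := hb.one_le
    constructor <;> grind
  strictMonoOn := strictMono_id.strictMonoOn _
  isPending_iff x := by
    have (hx : LetterAt t true x) := hx.one_le
    simp only [IsPending]
    grind
  rel_iff := by simp

theorem IsState.succ_of_opener (hN : IsState σ τ t i N o h ρ) (hi : t[i]? = some true)
    (hρ : ∀ b a, ρ b a → b < h ∧ a < h) :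
    IsState σ τ t (i + 1) N (Function.update o h (i + 1)) (h + 1) ρ where
  isAvoidingPrefix := hN.isAvoidingPrefix.of_opener hi
  strictMonoOn a ha b hb hab := by
    have hah : a < h := by simp only [Set.mem_Iio] at hb; omega
    have ho := (hN.isPending hah).2.1
    rw [Function.update_of_ne hah.ne]
    rcases eq_or_ne b h with rfl | hbh
    · rw [Function.update_self]
      omega
    · rw [Function.update_of_ne hbh]
      exact hN.strictMonoOn hah (by simp only [Set.mem_Iio] at hb ⊢; omega) hab
  isPending_iff x := by
    rw [isPending_succ_of_opener hN.isAvoidingPrefix hi, hN.isPending_iff,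
      Nat.exists_lt_succ_right, Function.update_self, eq_comm (a := x)]
    refine or_congr_left (exists_congr fun a => and_congr_right fun ha => ?_)
    rw [Function.update_of_ne ha.ne]
  rel_iff b hb a ha := by
    by_cases hba : b < h ∧ a < h
    · rw [Function.update_of_ne hba.1.ne, Function.update_of_ne hba.2.ne]
      exact hN.rel_iff b hba.1 a hba.2
    · refine iff_of_false (hba ∘ hρ b a) ?_
      rintro ⟨p, p', hp, hb', ha', -⟩
      have := hN.isAvoidingPrefix.le hp
      simp only [Function.update_apply] at hb' ha'
      grind

theorem IsState.isPending_succ_iff {j : ℕ} (hN : IsState σ τ t i N o (h + 1) ρ)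
    (hi : t[i]? = some false) (hj : j < h + 1) (x : ℕ) :
    IsPending t (i + 1) (insert (o j, i + 1) N) x ↔ ∃ a < h, o (skip j a) = x := by
  rw [isPending_succ_insert hi, hN.isPending_iff]
  constructor
  · rintro ⟨⟨b, hb, rfl⟩, hbj⟩
    obtain ⟨a, ha, rfl⟩ := (exists_skip_eq_iff hj).2 ⟨hb, fun h => hbj (h ▸ rfl)⟩
    exact ⟨a, ha, rfl⟩
  · rintro ⟨a, ha, rfl⟩
    obtain ⟨hlt, hne⟩ := (exists_skip_eq_iff hj).1 ⟨a, ha, rfl⟩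
    exact ⟨⟨_, hlt, rfl⟩, fun h => hne (hN.strictMonoOn.injOn hlt hj h)⟩

theorem IsState.precedes_succ_iff {j : ℕ} (hN : IsState σ τ t i N o (h + 1) ρ)
    (hj : j < h + 1) {b a : ℕ} (hb : b < h) (ha : a < h) :
    Precedes σ τ (insert (o j, i + 1) N) (o (skip j b)) (o (skip j a)) ↔
      closeRel σ τ j ρ (skip j b) (skip j a) := by
  rw [precedes_insert (hN.isPending (skip_lt hb)).2.1 (hN.isPending (skip_lt ha)).2.1,
    ← hN.rel_iff _ (skip_lt hb) _ (skip_lt ha),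
    forbids_congr σ τ hN.strictMonoOn hj (skip_lt hb) (skip_lt ha), closeRel]

theorem IsState.succ_of_closer {j : ℕ} {ρ' : ℕ → ℕ → Prop} (hN : IsState σ τ t i N o (h + 1) ρ)
    (hi : t[i]? = some false) (hj : j < h + 1) (hfree : ∀ a < h + 1, ¬ ρ j a)
    (hρ' : ∀ b < h, ∀ a < h, (ρ' b a ↔ closeRel σ τ j ρ (skip j b) (skip j a))) :
    IsState σ τ t (i + 1) (insert (o j, i + 1) N) (o ∘ skip j) h ρ' where
  isAvoidingPrefix := by
    refine hN.isAvoidingPrefix.insert_of_closer hi (hN.isPending hj) fun x hx => ?_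
    obtain ⟨a, ha, rfl⟩ := (hN.isPending_iff x).1 hx
    rw [← hN.rel_iff j hj a ha]
    exact hfree a ha
  strictMonoOn := hN.strictMonoOn.comp ((skip_strictMono j).strictMonoOn _) fun _ => skip_lt
  isPending_iff := hN.isPending_succ_iff hi hj
  rel_iff b hb a ha := (hρ' b hb a ha).trans (hN.precedes_succ_iff hj hb ha).symm

theorem IsState.completions_eq_empty {n j : ℕ} (hN : IsState σ τ t i N o (h + 1) ρ)
    (hi : t[i]? = some false) (hj : j < h + 1) (hinf : Infeasible σ τ h ρ j) :
    completions σ τ n t (i + 1) (insert (o j, i + 1) N) = ∅ := by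
  rcases hinf with ⟨a, ha, hja⟩ | ⟨a, ha, b, hb, haj, hbj, hab, hba⟩
  · exact completions_succ_insert_eq_empty_of_precedes hN.isAvoidingPrefix (hN.isPending ha)
      ((hN.rel_iff j hj a ha).1 hja)
  · obtain ⟨a', ha', rfl⟩ := (exists_skip_eq_iff hj).2 ⟨ha, haj⟩
    obtain ⟨b', hb', rfl⟩ := (exists_skip_eq_iff hj).2 ⟨hb, hbj⟩
    exact completions_eq_empty_of_precedes_precedes
      ((hN.isPending_succ_iff hi hj _).2 ⟨a', ha', rfl⟩)
      ((hN.isPending_succ_iff hi hj _).2 ⟨b', hb', rfl⟩)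
      ((hN.precedes_succ_iff hj hb' ha').2 hba) ((hN.precedes_succ_iff hj ha' hb').2 hab)

end State

section Path

variable {n i : ℕ} {t : List Bool}

theorem count_take_succ {c d : Bool} (hi : t[i]? = some c) :
    (t.take (i + 1)).count d = (t.take i).count d + if c = d then 1 else 0 := by
  rw [List.take_add_one, List.count_append, hi, Option.toList_some, List.count_singleton]
  simp only [beq_iff_eq]

theorem card_filter_getElem?_eq (t : List Bool) (c : Bool) (i : ℕ) :
    ((Finset.range i).filter fun k => t[k]? = some c).card = (t.take i).count c := by
  induction i with
  | zero => simp
  | succ i ih =>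
    rw [Finset.range_add_one, Finset.filter_insert]
    rcases hi : t[i]? with _ | d
    · simp [List.take_add_one, hi, ih]
    · rw [count_take_succ hi, ← ih]
      split_ifs <;> simp_all

theorem IsDyckPath.hseq_succ_of_opener (ht : IsDyckPath n t) (hi : t[i]? = some true) :
    hseq t (i + 1) = hseq t i + 1 := by
  have := ht.2.2 i
  rw [hseq, hseq, count_take_succ hi, count_take_succ hi, if_pos rfl, if_neg (by decide)]
  omega

theorem IsDyckPath.hseq_of_closer (ht : IsDyckPath n t) (hi : t[i]? = some false) :
    hseq t i = hseq t (i + 1) + 1 := by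
  have := ht.2.2 (i + 1)
  rw [hseq, hseq]
  rw [count_take_succ hi, count_take_succ hi, if_pos rfl, if_neg (by decide)] at *
  omega

theorem IsDyckPath.count_false (ht : IsDyckPath n t) : t.count false = n := by
  have := List.count_false_add_count_true t
  have := ht.1
  have := ht.2.1
  omega

theorem IsDyckPath.hseq_length (ht : IsDyckPath n t) : hseq t (2 * n) = 0 := by
  rw [hseq, ← ht.1, List.take_length, ht.2.1, ht.count_false, Nat.sub_self]

/-- The number of south steps of `t` after the `i`-th vertex that do not end on the diagonal. -/
def nonreturns (t : List Bool) (i : ℕ) : ℕ :=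
  ((Finset.Ico i t.length).filter fun k => t[k]? = some false ∧ hseq t (k + 1) ≠ 0).card

theorem nonreturns_eq_succ_add (hi : i < t.length) :
    nonreturns t i =
      nonreturns t (i + 1) + if t[i]? = some false ∧ hseq t (i + 1) ≠ 0 then 1 else 0 := by
  rw [nonreturns, ← Finset.insert_Ico_add_one_left_eq_Ico hi, Finset.filter_insert]
  split_ifs
  · exact Finset.card_insert_of_notMem (by simp)
  · rfl

theorem nonreturns_length : nonreturns t t.length = 0 := by
  simp [nonreturns]

theorem IsDyckPath.nonreturns_zero (ht : IsDyckPath n t) : nonreturns t 0 = n - returnsOf t := by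
  have hreturns : returnsOf t =
      ((Finset.range t.length).filter fun k => t[k]? = some false ∧ hseq t (k + 1) = 0).card := by
    refine congrArg Finset.card (Finset.filter_congr fun k _ => and_congr_right fun _ => ?_)
    have := ht.2.2 (k + 1)
    rw [hseq]
    omega
  have hclosers := card_filter_getElem?_eq t false t.length
  rw [List.take_length, ht.count_false, ← Finset.card_filter_add_card_filter_not
    (p := fun k => hseq t (k + 1) = 0), Finset.filter_filter, Finset.filter_filter] at hclosers
  rw [nonreturns, hreturns, ← hclosers, Nat.add_sub_cancel_left, Finset.range_eq_Ico]

end Path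

/-- The pair `{σ, τ}` satisfies the counting formula `|M_F(σ, τ)| = 2 ^ (n - r(F))` for all `n` and
all boards `F`. -/
def HasPowTwoCount {k : ℕ} (σ τ : Equiv.Perm (Fin k)) : Prop :=
  ∀ n t, IsDyckPath n t → (avoiders σ τ n t).ncard = 2 ^ (n - returnsOf t)

section Weight

variable {σ τ : Equiv.Perm (Fin 3)} {S : ℕ → (ℕ → ℕ → Prop) → ℚ → Prop}

theorem IsWeight.ncard_completions_of_closer (hS : IsWeight σ τ S) {n i h m : ℕ} {t : List Bool}
    (hi : t[i]? = some false)
    (ih : ∀ {N o ρ W}, IsState σ τ t (i + 1) N o h ρ → S h ρ W →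
      ((completions σ τ n t (i + 1) N).ncard : ℚ) = 2 ^ m * W)
    {N : Finset (ℕ × ℕ)} {o : ℕ → ℕ} {ρ : ℕ → ℕ → Prop} {W : ℚ}
    (hN : IsState σ τ t i N o (h + 1) ρ) (hW : S (h + 1) ρ W) :
    ((completions σ τ n t i N).ncard : ℚ) = 2 ^ (m + if h = 0 then 0 else 1) * W := by
  obtain ⟨V, hsum, hV⟩ := hS.closer hW
  have card_eq (j : ℕ) (hj : j < h + 1) :
      ((completions σ τ n t (i + 1) (insert (o j, i + 1) N)).ncard : ℚ) = 2 ^ m * V j := by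
    rcases hV j hj with ⟨hVj, hinf⟩ | ⟨hfree, ρ', hW', hρ'⟩
    · rw [hN.completions_eq_empty hi hj hinf, hVj, Set.ncard_empty, Nat.cast_zero, mul_zero]
    · exact ih (hN.succ_of_closer hi hj hfree hρ') hW'
  rw [ncard_completions_eq_sum hN.isAvoidingPrefix hi hN.strictMonoOn.injOn
    hN.isPending_iff, Nat.cast_sum,
    Finset.sum_congr rfl fun j hj => card_eq j (Finset.mem_range.1 hj), ← Finset.mul_sum, hsum]
  split_ifs <;> ring

theorem IsWeight.ncard_completions (hS : IsWeight σ τ S) {n : ℕ} {t : List Bool}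
    (ht : IsDyckPath n t) {i : ℕ} (hi : i ≤ 2 * n) {N : Finset (ℕ × ℕ)} {o : ℕ → ℕ}
    {ρ : ℕ → ℕ → Prop} {W : ℚ} (hN : IsState σ τ t i N o (hseq t i) ρ) (hW : S (hseq t i) ρ W) :
    ((completions σ τ n t i N).ncard : ℚ) = 2 ^ nonreturns t i * W := by
  induction hi using Nat.decreasingInduction generalizing N o ρ W with
  | self =>
    have hh := ht.hseq_length
    have hpending (x : ℕ) : ¬ IsPending t (2 * n) N x := by
      rw [hN.isPending_iff, hh]
      simp
    have hW1 : W = 1 := hS.eq_one (hh ▸ hW)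
    rw [hN.isAvoidingPrefix.completions_eq_singleton ht.1 hpending, hW1, ← ht.1,
      nonreturns_length]
    simp
  | of_succ i hi ih =>
    have hit : i < t.length := by have := ht.1; omega
    rw [nonreturns_eq_succ_add hit]
    rcases hc : t[i]? with _ | c
    · exact absurd hc (by simpa using hit)
    cases c with
    | true =>
      have hh := ht.hseq_succ_of_opener hc
      rw [← completions_succ_of_opener hc, if_neg (by simp), add_zero]
      exact ih (hh ▸ hN.succ_of_opener hc fun _ _ => hS.lt_of_rel hW) (hh ▸ hS.opener hW)
    | false =>
      rw [ht.hseq_of_closer hc] at hN hW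
      rw [hS.ncard_completions_of_closer hc ih hN hW]
      simp only [true_and, ite_not]

theorem IsWeight.hasPowTwoCount (hS : IsWeight σ τ S) : HasPowTwoCount σ τ := by
  intro n t ht
  have hcard := hS.ncard_completions ht (Nat.zero_le _) isState_zero hS.start
  rw [completions_zero, ht.nonreturns_zero, mul_one] at hcard
  exact_mod_cast hcard

end Weight

/-! ### Weights for the individual pairs -/

/-- The weights for pairs of patterns under which every choice either imposes no restriction on the
remaining open arcs or cannot be completed. -/
def FreeState (_h : ℕ) (ρ : ℕ → ℕ → Prop) (W : ℚ) : Prop :=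
  (∀ b a, ¬ ρ b a) ∧ W = 1

theorem isWeight_freeState {σ τ : Equiv.Perm (Fin 3)} {c d : ℕ → ℕ}
    (hc : ∀ h, c h ≤ h) (hd : ∀ h, d h ≤ h) (hcd : ∀ h, h ≠ 0 → c h ≠ d h)
    (hfree : ∀ h j, j = c h ∨ j = d h → ∀ b ≤ h, ∀ a ≤ h, b ≠ j → a ≠ j → ¬ Forbids σ τ j b a)
    (hconflict : ∀ h j, j ≤ h → j ≠ c h → j ≠ d h → ∃ a ≤ h, ∃ b ≤ h, a ≠ j ∧ b ≠ j ∧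
      Forbids σ τ j a b ∧ Forbids σ τ j b a) :
    IsWeight σ τ FreeState where
  start := ⟨fun _ _ => id, rfl⟩
  eq_one hW := hW.2
  lt_of_rel hW hba := absurd hba (hW.1 _ _)
  opener := id
  closer {h ρ W} hW := by
    obtain ⟨hρ, rfl⟩ := hW
    refine ⟨fun j => if j = c h ∨ j = d h then 1 else 0, ?_, fun j hj => ?_⟩
    · have hfilter : (Finset.range (h + 1)).filter (fun j => j = c h ∨ j = d h) = {c h, d h} := by
        ext j
        have := hc h
        have := hd h
        simp only [Finset.mem_filter, Finset.mem_range, Finset.mem_insert, Finset.mem_singleton]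
        omega
      rw [Finset.sum_boole, hfilter, mul_one]
      split_ifs with h0
      · have hcd : c h = d h := by have := hc h; have := hd h; omega
        simp [hcd]
      · rw [Finset.card_pair (hcd h h0), Nat.cast_ofNat]
    · by_cases hj' : j = c h ∨ j = d h
      · refine .inr ⟨fun a _ => hρ j a, fun _ _ => False, ⟨fun _ _ => id, if_pos hj'⟩, ?_⟩
        intro b hb a ha
        obtain ⟨hb, hbj⟩ := (exists_skip_eq_iff hj).1 ⟨b, hb, rfl⟩
        obtain ⟨ha, haj⟩ := (exists_skip_eq_iff hj).1 ⟨a, ha, rfl⟩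
        simp only [closeRel, hρ, false_or, false_iff]
        exact hfree h j hj' _ (by omega) _ (by omega) hbj haj
      · obtain ⟨a, ha, b, hb, haj, hbj, hab, hba⟩ :=
          hconflict h j (by omega) (fun h => hj' (.inl h)) (fun h => hj' (.inr h))
        exact .inl ⟨if_neg hj', .inr ⟨a, by omega, b, by omega, haj, hbj, .inr hab, .inr hba⟩⟩

theorem isWeight_p123_p213 : IsWeight p123 p213 FreeState := by
  refine isWeight_freeState (c := fun _ => 0) (d := fun h => min 1 h) (by omega) (by omega)
    (by omega) ?_ ?_ <;> simp only [Forbids, openerPattern_p123, openerPattern_p213]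
  · omega
  · exact fun h j _ _ _ => ⟨0, by omega, 1, by omega, by omega⟩

theorem isWeight_p312_p321 : IsWeight p312 p321 FreeState := by
  refine isWeight_freeState (c := fun h => h) (d := fun h => h - 1) (by omega) (by omega)
    (by omega) ?_ ?_ <;> simp only [Forbids, openerPattern_p312, openerPattern_p321]
  · omega
  · exact fun h j _ _ _ => ⟨h, by omega, h - 1, by omega, by omega⟩

theorem isWeight_p132_p231 : IsWeight p132 p231 FreeState := by
  refine isWeight_freeState (c := fun _ => 0) (d := fun h => h) (by omega) (by omega)
    (by omega) ?_ ?_ <;> simp only [Forbids, openerPattern_p132, openerPattern_p231]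
  · omega
  · exact fun h j _ _ _ => ⟨0, by omega, h, by omega, by omega⟩

theorem sum_half_pow (k h : ℕ) (hk : k ≤ h) :
    ∑ j ∈ Finset.range h, (if k ≤ j then (1 / 2 : ℚ) ^ j else 0) =
      2 * ((1 / 2) ^ k - (1 / 2) ^ h) := by
  induction h, hk using Nat.le_induction with
  | base =>
    rw [sub_self, mul_zero]
    exact Finset.sum_eq_zero fun j hj => if_neg (Finset.mem_range.1 hj).not_ge
  | succ h hk ih =>
    rw [Finset.sum_range_succ, ih, if_pos hk]
    ring

theorem sum_half_pow_min (k h : ℕ) (hk : k ≤ h) :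
    ∑ j ∈ Finset.range (h + 1), (if k ≤ j then (1 / 2 : ℚ) ^ min j (h - 1) else 0) =
      (if h = 0 then 1 else 2) * (1 / 2) ^ k := by
  rcases h with _ | h
  · simp [show k = 0 by omega]
  · have hmin : ∀ j ∈ Finset.range (h + 1),
        (if k ≤ j then (1 / 2 : ℚ) ^ min j (h + 1 - 1) else 0) =
          if k ≤ j then (1 / 2 : ℚ) ^ j else 0 := fun j hj => by
      rw [min_eq_left (by have := Finset.mem_range.1 hj; omega)]
    rw [Finset.sum_range_succ, Finset.sum_congr rfl hmin, sum_half_pow k (h + 1) hk, if_pos hk,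
      min_eq_right (by omega), if_neg h.succ_ne_zero, Nat.add_sub_cancel]
    ring

/-- The weights for `{213, 231}`: each of the `k` lowest open arcs has to wait for all those above
it and below rank `m`. -/
def WaitingState (h : ℕ) (ρ : ℕ → ℕ → Prop) (W : ℚ) : Prop :=
  ∃ k m, (k = 0 ∨ k < m) ∧ m ≤ h ∧ W = (1 / 2) ^ k ∧ ∀ b a, ρ b a ↔ b < k ∧ b < a ∧ a < m

theorem isWeight_p213_p231 : IsWeight p213 p231 WaitingState where
  start := ⟨0, 0, .inl rfl, le_rfl, (pow_zero _).symm, by simp⟩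
  eq_one := by
    rintro ρ W ⟨k, m, hkm, hm, rfl, -⟩
    rw [show k = 0 by omega, pow_zero]
  lt_of_rel := by
    rintro h ρ W b a ⟨k, m, -, hm, -, hρ⟩ hba
    have := (hρ b a).1 hba
    omega
  opener := by
    rintro h ρ W ⟨k, m, hkm, hm, hWρ⟩
    exact ⟨k, m, hkm, hm.trans h.le_succ, hWρ⟩
  closer := by
    rintro h ρ W ⟨k, m, hkm, hm, rfl, hρ⟩
    refine ⟨_, sum_half_pow_min k h (by omega), fun j hj => ?_⟩
    by_cases hkj : k ≤ j
    · refine .inr ⟨fun a _ => by rw [hρ]; omega,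
        fun b a => b < min j (h - 1) ∧ b < a ∧ a < h,
        ⟨min j (h - 1), h, by omega, le_rfl, if_pos hkj, fun _ _ => Iff.rfl⟩, fun b hb a ha => ?_⟩
      simp only [closeRel, Forbids, openerPattern_p213, openerPattern_p231, hρ, skip]
      split_ifs <;> omega
    · exact .inl ⟨if_neg hkj, .inl ⟨j + 1, by omega, (hρ _ _).2 (by omega)⟩⟩

/-- The weights for `{132, 213}`: the arcs of rank below `k` have to close in decreasing order, all
of them before the arcs whose rank is in `[k, m)`. -/
def BarrierState (h : ℕ) (ρ : ℕ → ℕ → Prop) (W : ℚ) : Prop :=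
  ∃ k m, k ≤ m ∧ m ≤ h ∧ W = (1 / 2) ^ min k (m - 1) ∧
    ∀ b a, ρ b a ↔ a < k ∧ (b < a ∨ k ≤ b ∧ b < m)

theorem barrierState_closer {k m h j : ℕ} {ρ : ℕ → ℕ → Prop} (hj : j < h + 1)
    (hkj : k ≤ j + 1) (hjm : j + 1 = k ∨ k = 0 ∨ k = m)
    (hρ : ∀ b a, ρ b a ↔ a < k ∧ (b < a ∨ k ≤ b ∧ b < m)) :
    (∀ a < h + 1, ¬ ρ j a) ∧ ∃ ρ', BarrierState h ρ' ((1 / 2) ^ min j (h - 1)) ∧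
      ∀ b < h, ∀ a < h, (ρ' b a ↔ closeRel p132 p213 j ρ (skip j b) (skip j a)) := by
  refine ⟨fun a _ => by rw [hρ]; omega, fun b a => a < j ∧ (b < a ∨ j ≤ b ∧ b < h),
    ⟨j, h, by omega, le_rfl, rfl, fun _ _ => Iff.rfl⟩, fun b hb a _ => ?_⟩
  simp only [closeRel, Forbids, openerPattern_p132, openerPattern_p213, hρ, skip]
  split_ifs <;> omega

theorem isWeight_p132_p213 : IsWeight p132 p213 BarrierState where
  start := ⟨0, 0, le_rfl, le_rfl, by simp, by simp⟩
  eq_one := by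
    rintro ρ W ⟨k, m, hkm, hm, rfl, -⟩
    rw [show min k (m - 1) = 0 by omega, pow_zero]
  lt_of_rel := by
    rintro h ρ W b a ⟨k, m, hkm, hm, -, hρ⟩ hba
    have := (hρ b a).1 hba
    omega
  opener := by
    rintro h ρ W ⟨k, m, hkm, hm, hWρ⟩
    exact ⟨k, m, hkm, hm.trans h.le_succ, hWρ⟩
  closer := by
    rintro h ρ W ⟨k, m, hkm, hm, rfl, hρ⟩
    by_cases hchain : k = 0 ∨ k = m
    · rw [show min k (m - 1) = k - 1 by omega]
      refine ⟨_, sum_half_pow_min (k - 1) h (by omega), fun j hj => ?_⟩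
      by_cases hkj : k - 1 ≤ j
      · rw [if_pos hkj]
        exact .inr (barrierState_closer hj (by omega) (.inr hchain) hρ)
      · exact .inl ⟨if_neg hkj, .inl ⟨j + 1, by omega, (hρ _ _).2 (by omega)⟩⟩
    · refine ⟨fun j => if j = k - 1 then (1 / 2) ^ min j (h - 1) else 0, ?_, fun j hj => ?_⟩
      · rw [Finset.sum_ite_eq' _ (k - 1), if_pos (Finset.mem_range.2 (by omega)),
          if_neg (by omega), show min (k - 1) (h - 1) = k - 1 by omega,
          show min k (m - 1) = k - 1 + 1 by omega]
        ring
      · by_cases hjk : j = k - 1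
        · simp only [if_pos hjk]
          exact .inr (barrierState_closer hj (by omega) (by omega) hρ)
        · refine .inl ⟨if_neg hjk, ?_⟩
          rcases lt_or_ge j m with hjm | hjm
          · exact .inl ⟨k - 1, by omega, (hρ _ _).2 (by omega)⟩
          · -- `k - 1` has to close before `k`, but closing `j` forces the opposite order
            refine .inr ⟨k, by omega, k - 1, by omega, by omega, by omega, ?_, ?_⟩ <;>
            simp only [closeRel, Forbids, openerPattern_p132, openerPattern_p213, hρ] <;>
            omega

/-- Below the rank `s` the relation is `ρ`; the arcs whose rank is in `[s, e)` have to close in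
increasing order, all of them before the arcs of rank below `s`. -/
def pushRel (s e : ℕ) (ρ : ℕ → ℕ → Prop) (b a : ℕ) : Prop :=
  ρ b a ∨ s ≤ a ∧ a < e ∧ (b < s ∨ a < b ∧ b < e)

/-- The weights for `{231, 312}`: starting from the empty relation, blocks of open arcs are put on
top of one another. -/
inductive StackState : ℕ → (ℕ → ℕ → Prop) → ℚ → Prop
  | nil (h : ℕ) : StackState h (fun _ _ => False) 1
  | push {s e h : ℕ} {ρ : ℕ → ℕ → Prop} {W : ℚ} (hse : s < e) (heh : e ≤ h)
      (hW : StackState s ρ W) : StackState h (pushRel s e ρ) (W * (2 ^ max s 1 / 2 ^ e))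

theorem StackState.mono {h h' : ℕ} {ρ : ℕ → ℕ → Prop} {W : ℚ} (hW : StackState h ρ W)
    (hh : h ≤ h') : StackState h' ρ W := by
  cases hW with
  | nil => exact nil h'
  | push hse heh hW => exact push hse (heh.trans hh) hW

theorem StackState.lt_of_rel {h : ℕ} {ρ : ℕ → ℕ → Prop} {W : ℚ} (hW : StackState h ρ W)
    {b a : ℕ} (hba : ρ b a) : b < h ∧ a < h := by
  induction hW with
  | nil => exact hba.elim
  | push hse heh _ ih =>
    rcases hba with hba | hba
    · have := ih hba
      omega
    · omega

theorem StackState.rel_skip_iff {s j : ℕ} {ρ : ℕ → ℕ → Prop} {W : ℚ} (hW : StackState s ρ W)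
    (hsj : s ≤ j) (b a : ℕ) : ρ (skip j b) (skip j a) ↔ ρ b a := by
  by_cases hba : b < j ∧ a < j
  · rw [skip, skip, if_pos hba.1, if_pos hba.2]
  · refine iff_of_false (fun h => ?_) (fun h => ?_) <;> have := hW.lt_of_rel h
    · unfold skip at this
      split_ifs at this <;> omega
    · omega

/-- The case `s = h` is included: an empty block leaves the relation unchanged. -/
theorem StackState.exists_pushRel {s h : ℕ} {ρ : ℕ → ℕ → Prop} {W : ℚ} (hW : StackState s ρ W)
    (hsh : s ≤ h) : ∃ ρ', StackState h ρ' (W * (2 ^ max s 1 / 2 ^ max h 1)) ∧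
      ∀ b a, ρ' b a ↔ pushRel s h ρ b a := by
  rcases hsh.eq_or_lt with rfl | hsh
  · rw [div_self (by positivity), mul_one]
    exact ⟨ρ, hW, fun b a => (or_iff_left (by omega)).symm⟩
  · rw [max_eq_left (show 1 ≤ h by omega)]
    exact ⟨_, push hsh le_rfl hW, fun _ _ => Iff.rfl⟩

/-- Closing an arc `j` that lies above all restricted ones pushes the arcs above `j`. -/
theorem StackState.closer_of_le {h j : ℕ} {ρ : ℕ → ℕ → Prop} {W : ℚ} (hW : StackState j ρ W)
    (hj : j < h + 1) : (∀ a < h + 1, ¬ ρ j a) ∧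
      ∃ ρ', StackState h ρ' (W * (2 ^ max j 1 / 2 ^ max h 1)) ∧
        ∀ b < h, ∀ a < h, (ρ' b a ↔ closeRel p231 p312 j ρ (skip j b) (skip j a)) := by
  obtain ⟨ρ', hW', hρ'⟩ := hW.exists_pushRel (Nat.le_of_lt_succ hj)
  refine ⟨fun a _ h => (hW.lt_of_rel h).1.false, ρ', hW', fun b hb a ha => ?_⟩
  rw [hρ', pushRel, closeRel, hW.rel_skip_iff le_rfl]
  refine or_congr_right ?_
  simp only [Forbids, openerPattern_p231, openerPattern_p312, skip]
  split_ifs <;> omega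

/-- Closing the lowest arc of the top block extends this block to all the arcs above. -/
theorem StackState.closer_of_pushRel {s e h : ℕ} {ρ : ℕ → ℕ → Prop} {W : ℚ}
    (hW : StackState s ρ W) (hse : s < e) (heh : e ≤ h + 1) :
    (∀ a < h + 1, ¬ pushRel s e ρ s a) ∧
      ∃ ρ', StackState h ρ' (W * (2 ^ max s 1 / 2 ^ max h 1)) ∧
        ∀ b < h, ∀ a < h,
          (ρ' b a ↔ closeRel p231 p312 s (pushRel s e ρ) (skip s b) (skip s a)) := by
  obtain ⟨ρ', hW', hρ'⟩ := hW.exists_pushRel (show s ≤ h by omega)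
  refine ⟨?_, ρ', hW', fun b hb a ha => ?_⟩
  · rintro a - (h | h)
    · exact (hW.lt_of_rel h).1.false
    · omega
  rw [hρ', closeRel, pushRel, pushRel, hW.rel_skip_iff le_rfl, or_assoc]
  refine or_congr_right ?_
  simp only [Forbids, openerPattern_p231, openerPattern_p312, skip]
  split_ifs <;> omega

theorem sum_two_pow_max {e h : ℕ} (heh : e ≤ h + 1) :
    ∑ j ∈ Finset.range (h + 1), (if e ≤ j then (2 : ℚ) ^ max j 1 else 0) +
      (if e = 0 then 0 else 2 ^ e) = 2 ^ (h + 1) := by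
  induction h with
  | zero => interval_cases e <;> norm_num
  | succ h ih =>
    rcases heh.eq_or_lt with rfl | heh
    · rw [Finset.sum_eq_zero fun j hj => if_neg (Finset.mem_range.1 hj).not_ge, zero_add,
        if_neg (Nat.succ_ne_zero _)]
    · rw [Finset.sum_range_succ, if_pos (Nat.le_of_lt_succ heh), add_right_comm,
        ih (Nat.le_of_lt_succ heh), max_eq_left (by omega)]
      ring

theorem two_pow_succ_div_two_pow_max (h : ℕ) :
    (2 : ℚ) ^ (h + 1) / 2 ^ max h 1 = if h = 0 then 1 else 2 := by
  split_ifs with h0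
  · norm_num [h0]
  · rw [max_eq_left (by omega), pow_succ, mul_div_cancel_left₀ _ (by positivity)]

theorem StackState.closer_nil (h : ℕ) : ∃ V : ℕ → ℚ,
    ∑ j ∈ Finset.range (h + 1), V j = (if h = 0 then 1 else 2) * 1 ∧
    ∀ j < h + 1, (∀ a < h + 1, ¬ False) ∧ ∃ ρ', StackState h ρ' (V j) ∧
      ∀ b < h, ∀ a < h,
        (ρ' b a ↔ closeRel p231 p312 j (fun _ _ => False) (skip j b) (skip j a)) := by
  refine ⟨fun j => 1 * (2 ^ max j 1 / 2 ^ max h 1), ?_, fun j hj => (nil j).closer_of_le hj⟩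
  have hsum := sum_two_pow_max (Nat.zero_le (h + 1))
  simp only [zero_le, if_true, add_zero] at hsum
  rw [← Finset.mul_sum, ← Finset.sum_div, hsum, two_pow_succ_div_two_pow_max, mul_comm]

theorem StackState.closer_push {s e h : ℕ} {ρ : ℕ → ℕ → Prop} {W : ℚ}
    (hW : StackState s ρ W) (hse : s < e) (heh : e ≤ h + 1) : ∃ V : ℕ → ℚ,
    ∑ j ∈ Finset.range (h + 1), V j = (if h = 0 then 1 else 2) * (W * (2 ^ max s 1 / 2 ^ e)) ∧
    ∀ j < h + 1, (V j = 0 ∧ Infeasible p231 p312 h (pushRel s e ρ) j) ∨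
      ((∀ a < h + 1, ¬ pushRel s e ρ j a) ∧ ∃ ρ', StackState h ρ' (V j) ∧ ∀ b < h, ∀ a < h,
        (ρ' b a ↔ closeRel p231 p312 j (pushRel s e ρ) (skip j b) (skip j a))) := by
  refine ⟨fun j => (if j = s then W * (2 ^ max s 1 / 2 ^ max h 1) else 0) +
    W * (2 ^ max s 1 / 2 ^ e) / 2 ^ max h 1 * (if e ≤ j then 2 ^ max j 1 else 0), ?_,
    fun j hj => ?_⟩
  · have hsum := sum_two_pow_max heh
    rw [if_neg (by omega), ← eq_sub_iff_add_eq] at hsum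
    rw [Finset.sum_add_distrib, Finset.sum_ite_eq', if_pos (Finset.mem_range.2 (by omega)),
      ← Finset.mul_sum, hsum, ← two_pow_succ_div_two_pow_max]
    field_simp
    ring
  · beta_reduce
    rcases eq_or_ne j s with rfl | hjs
    · rw [if_pos rfl, if_neg hse.not_ge, mul_zero, add_zero]
      exact .inr (hW.closer_of_pushRel hse heh)
    rcases le_or_gt e j with hej | hej
    · rw [if_neg hjs, if_pos hej, zero_add, div_mul_eq_mul_div, mul_div_assoc]
      exact .inr ((push hse hej hW).closer_of_le hj)
    · rw [if_neg hjs, if_neg hej.not_ge, mul_zero, add_zero]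
      exact .inl ⟨rfl, .inl ⟨s, by omega, .inr (by omega)⟩⟩

theorem isWeight_p231_p312 : IsWeight p231 p312 StackState where
  start := .nil 0
  eq_one hW := by
    cases hW with
    | nil => rfl
    | push hse heh => omega
  lt_of_rel hW := hW.lt_of_rel
  opener hW := hW.mono (Nat.le_succ _)
  closer hW := by
    cases hW with
    | nil =>
      obtain ⟨V, hsum, hV⟩ := StackState.closer_nil _
      exact ⟨V, hsum, fun j hj => .inr (hV j hj)⟩
    | push hse heh hW => exact hW.closer_push hse heh

/-! ### Reversal -/

/-- The mirror image of an arc of a matching of `[2n]`: the point `x` moves to `2n + 1 - x`. -/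
def revArc (n : ℕ) (p : ℕ × ℕ) : ℕ × ℕ := (2 * n + 1 - p.2, 2 * n + 1 - p.1)

/-- The mirror image of a matching of `[2n]`. -/
def revMatching (n : ℕ) (M : Finset (ℕ × ℕ)) : Finset (ℕ × ℕ) := M.image (revArc n)

/-- The mirror image of a path, read from its end with the two kinds of steps exchanged. -/
def revPath (t : List Bool) : List Bool := (t.map not).reverse

section Reversal

variable {n k i x : ℕ} {M : Finset (ℕ × ℕ)} {t : List Bool}

theorem revMatching_revMatching (hM : IsPerfectMatching n M) :
    revMatching n (revMatching n M) = M := by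
  rw [revMatching, revMatching, Finset.image_image]
  refine (Finset.image_congr fun p hp => ?_).trans Finset.image_id
  have := hM.1 p hp
  ext <;> simp only [revArc, Function.comp_apply, id] <;> omega

theorem isPerfectMatching_revMatching (hM : IsPerfectMatching n M) :
    IsPerfectMatching n (revMatching n M) := by
  refine ⟨Finset.forall_mem_image.2 fun p hp => ?_, fun x hx1 hx2 => ?_⟩
  · have := hM.1 p hp
    simp only [revArc]
    omega
  · obtain ⟨p, ⟨hp, hpx⟩, huniq⟩ := hM.2 (2 * n + 1 - x) (by omega) (by omega)
    have := hM.1 p hp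
    refine ⟨revArc n p, ⟨Finset.mem_image_of_mem _ hp, by simp only [revArc]; omega⟩, ?_⟩
    rintro q' ⟨hq', hqx⟩
    obtain ⟨q, hq, rfl⟩ := Finset.mem_image.1 hq'
    have := hM.1 q hq
    exact congrArg _ (huniq q ⟨hq, by simp only [revArc] at hqx; omega⟩)

theorem length_revPath : (revPath t).length = t.length := by
  simp [revPath]

theorem revPath_revPath (t : List Bool) : revPath (revPath t) = t := by
  simp [revPath, Function.comp_def]

theorem letterAt_revPath {c : Bool} (ht : t.length = 2 * n) (hx1 : 1 ≤ x) (hx2 : x ≤ 2 * n) :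
    LetterAt (revPath t) c (2 * n + 1 - x) ↔ LetterAt t (!c) x := by
  obtain ⟨i, rfl⟩ : ∃ i, x = i + 1 := ⟨x - 1, by omega⟩
  rw [show 2 * n + 1 - (i + 1) = (2 * n - 1 - i) + 1 by omega, letterAt_succ, letterAt_succ,
    revPath, List.getElem?_reverse (by rw [List.length_map]; omega), List.length_map, ht,
    show 2 * n - 1 - (2 * n - 1 - i) = i by omega, List.getElem?_map]
  cases t[i]? <;> simp [Bool.eq_not_iff]

theorem shapeOf_revMatching (hM : IsPerfectMatching n M) :
    shapeOf n (revMatching n M) = revPath (shapeOf n M) := by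
  rw [shapeOf_eq_iff (isPerfectMatching_revMatching hM) (length_revPath.trans length_shapeOf)]
  intro a b hab
  obtain ⟨⟨c, d⟩, hcd, hrev⟩ := Finset.mem_image.1 hab
  obtain ⟨rfl, rfl⟩ := Prod.mk.inj hrev
  have := hM.bounds hcd
  rw [letterAt_revPath length_shapeOf (by omega) (by omega),
    letterAt_revPath length_shapeOf (by omega) (by omega)]
  exact ⟨(letterAt_false_shapeOf hM).2 ⟨c, hcd⟩, (letterAt_true_shapeOf hM).2 ⟨d, hcd⟩⟩

theorem MatchContains.inv_revMatching {τ : Equiv.Perm (Fin k)} (hτ : MatchContains τ M)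
    (hM : IsPerfectMatching n M) : MatchContains τ⁻¹ (revMatching n M) := by
  obtain ⟨f, hf, harc⟩ := hτ
  have f_le (i : Fin (2 * k)) : f i ≤ 2 * n := by
    have hk : 0 < k := by have := i.isLt; omega
    refine (hf.monotone (Fin.le_def.2 ?_)).trans (hM.bounds (harc (τ.symm ⟨0, hk⟩))).2.2
    simp only [τ.apply_symm_apply]
    exact Nat.le_sub_one_of_lt i.isLt
  refine ⟨fun i => 2 * n + 1 - f i.rev, fun i j hij => ?_, fun a => ?_⟩
  · have := hf (Fin.rev_lt_rev.2 hij)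
    have := f_le i.rev
    simp only
    omega
  · refine Finset.mem_image.2 ⟨_, harc (τ.symm a), ?_⟩
    simp only [revArc, τ.apply_symm_apply, Equiv.Perm.inv_def, Fin.rev]
    have := a.isLt
    have := (τ.symm a).isLt
    refine Prod.ext (congrArg (2 * n + 1 - f ·) (Fin.ext ?_))
      (congrArg (2 * n + 1 - f ·) (Fin.ext ?_)) <;> simp only <;> omega

theorem count_map_not (l : List Bool) (c : Bool) : (l.map not).count c = l.count (!c) := by
  rw [List.count_eq_countP, List.count_eq_countP, List.countP_map]
  exact congrArg (List.countP · l) (funext fun d => by cases c <;> cases d <;> rfl)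

theorem count_take_revPath_add (ht : t.length = 2 * n) (i : ℕ) (c : Bool) :
    ((revPath t).take i).count c + (t.take (2 * n - i)).count (!c) = t.count (!c) := by
  rw [revPath, List.take_reverse, List.count_reverse, List.length_map, ht, ← List.map_drop,
    count_map_not, add_comm, ← List.count_append, List.take_append_drop]

theorem IsDyckPath.pathHeight_revPath (ht : IsDyckPath n t) (i : ℕ) :
    pathHeight (revPath t) i = pathHeight t (2 * n - i) := by
  have htrue := count_take_revPath_add ht.1 i true
  have hfalse := count_take_revPath_add ht.1 i false
  have := ht.2.1
  have := ht.count_false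
  simp only [Bool.not_true, Bool.not_false] at htrue hfalse
  unfold pathHeight
  omega

theorem isDyckPath_revPath (ht : IsDyckPath n t) : IsDyckPath n (revPath t) := by
  refine ⟨length_revPath.trans ht.1, ?_, fun i => ?_⟩
  · rw [revPath, List.count_reverse, count_map_not, Bool.not_true, ht.count_false]
  · have := ht.2.2 (2 * n - i)
    have := ht.pathHeight_revPath i
    unfold pathHeight at this
    omega

theorem IsDyckPath.pathHeight_succ_eq_zero_iff (ht : IsDyckPath n t) (hi : i < 2 * n) :
    pathHeight t (i + 1) = 0 ↔ t[i]? = some false ∧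
      (t.take (i + 1)).count true = (t.take (i + 1)).count false := by
  rw [pathHeight, sub_eq_zero, Nat.cast_inj, iff_and_self]
  intro hcount
  obtain ⟨c, hc⟩ := exists_letterAt i.succ_pos (ht.1 ▸ hi)
  rw [letterAt_succ] at hc
  cases c with
  | false => exact hc
  | true =>
    rw [count_take_succ hc, count_take_succ hc, if_pos rfl, if_neg (by decide)] at hcount
    have := ht.2.2 i
    omega

theorem IsDyckPath.returnsOf_add_one (ht : IsDyckPath n t) :
    returnsOf t + 1 = ∑ i ∈ Finset.range (2 * n + 1), if pathHeight t i = 0 then 1 else 0 := by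
  rw [Finset.sum_range_succ', if_pos (by simp [pathHeight]), returnsOf, ht.1,
    Finset.card_filter]
  simp only [Nat.add_right_cancel_iff]
  refine Finset.sum_congr rfl fun i hi => ?_
  simp only [ht.pathHeight_succ_eq_zero_iff (Finset.mem_range.1 hi)]

theorem IsDyckPath.returnsOf_revPath (ht : IsDyckPath n t) :
    returnsOf (revPath t) = returnsOf t := by
  rw [← Nat.add_right_cancel_iff (n := 1), (isDyckPath_revPath ht).returnsOf_add_one,
    ht.returnsOf_add_one, ← Finset.sum_range_reflect]
  refine Finset.sum_congr rfl fun i hi => ?_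
  have := Finset.mem_range.1 hi
  rw [ht.pathHeight_revPath, show 2 * n - (2 * n + 1 - 1 - i) = i by omega]

theorem revMatching_mem_avoiders {σ τ : Equiv.Perm (Fin k)} (hM : M ∈ avoiders σ τ n t) :
    revMatching n M ∈ avoiders σ⁻¹ τ⁻¹ n (revPath t) := by
  obtain ⟨hM, hσ, hτ, rfl⟩ := hM
  have hrev := isPerfectMatching_revMatching hM
  have avoids {π : Equiv.Perm (Fin k)} (hπ : MatchAvoids π M) :
      MatchAvoids π⁻¹ (revMatching n M) := fun h => hπ <| by
    simpa only [revMatching_revMatching hM, inv_inv] using h.inv_revMatching hrev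
  exact ⟨hrev, avoids hσ, avoids hτ, shapeOf_revMatching hM⟩

theorem HasPowTwoCount.inv {σ τ : Equiv.Perm (Fin k)} (h : HasPowTwoCount σ τ) :
    HasPowTwoCount σ⁻¹ τ⁻¹ := by
  intro n t ht
  rw [← ht.returnsOf_revPath, ← h n _ (isDyckPath_revPath ht)]
  refine Set.ncard_congr (fun M _ => revMatching n M) (fun M hM => ?_) (fun M M' hM hM' h => ?_)
    fun M hM => ?_
  · simpa only [inv_inv] using revMatching_mem_avoiders hM
  · rw [← revMatching_revMatching hM.1, h, revMatching_revMatching hM'.1]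
  · refine ⟨_, ?_, revMatching_revMatching hM.1⟩
    simpa only [revPath_revPath] using revMatching_mem_avoiders hM

end Reversal

/-- For every pair `{σ,τ}` in class I, every positive `n` and every
Ferrers board `F ∈ F_n` (with border path `t`), `|M_F(σ,τ)| = 2^{n − r(F)}`;
in particular all nine pairs are shape-Wilf-equivalent. -/
theorem card_matchings_classI_eq_two_pow
    (σ τ : Equiv.Perm (Fin 3)) (h : ClassIPair σ τ)
    (n : ℕ) (hn : 0 < n) (t : List Bool) (ht : IsDyckPath n t) :
    {M : Finset (ℕ × ℕ) | IsPerfectMatching n M ∧ MatchAvoids σ M ∧ MatchAvoids τ M ∧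
        shapeOf n M = t}.ncard = 2 ^ (n - returnsOf t) := by
  suffices hcount : HasPowTwoCount σ τ from hcount n t ht
  rcases h with ⟨rfl, rfl⟩ | ⟨rfl, rfl⟩ | ⟨rfl, rfl⟩ | ⟨rfl, rfl⟩ | ⟨rfl, rfl⟩ | ⟨rfl, rfl⟩ |
    ⟨rfl, rfl⟩ | ⟨rfl, rfl⟩ | ⟨rfl, rfl⟩
  · exact isWeight_p123_p213.hasPowTwoCount
  · exact isWeight_p132_p213.hasPowTwoCount
  · exact isWeight_p132_p231.hasPowTwoCount
  · exact (isWeight_p132_p231.hasPowTwoCount.inv : HasPowTwoCount p132⁻¹ p231⁻¹)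
  · exact isWeight_p213_p231.hasPowTwoCount
  · exact (isWeight_p213_p231.hasPowTwoCount.inv : HasPowTwoCount p213⁻¹ p231⁻¹)
  · exact isWeight_p231_p312.hasPowTwoCount
  · exact (isWeight_p312_p321.hasPowTwoCount.inv : HasPowTwoCount p312⁻¹ p321⁻¹)
  · exact isWeight_p312_p321.hasPowTwoCount
end
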